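/- arXiv:2304.00304 — 2 statements merged into one kernel-verified Lean document; each statement's English description precedes it below -/
import Mathlib

section
/- Let n ≥ k > r ≥ 1, D ∈ ℝ^{n×k}, and X, X̃ ∈ 𝕆^{n×k} be such that XᵀD ⪰ 0, X̃ᵀD ⪰ 0, and rank(XᵀD) = rank(X̃ᵀD) = r. Let XᵀD = VΣVᵀ and X̃ᵀD = ṼΣ̃Ṽᵀ be spectral (= singular value) decompositions with V, Ṽ ∈ 𝕆^{k×k} orthogonal, Σ = diag(σ_1, …, σ_r, 0, …, 0) and Σ̃ = diag(σ̃_1, …, σ̃_r, 0, …, 0) where σ_1 ≥ … ≥ σ_r > 0 and σ̃_1 ≥ … ≥ σ̃_r > 0; write V₁ = V_{(:,1:r)}, V₂ = V_{(:,r+1:k)}. Then there exists W ∈ 𝕆^{(k−r)×(k−r)} such that ‖X̃ − (XV₁V₁ᵀ + XV₂WV₂ᵀ)‖_F ≤ ( √2 + 2√2·‖D‖₂/(σ_r + σ̃_r) + 4‖D‖₂/max{σ_r, σ̃_r} ) · √(k − ‖XᵀX̃‖_F²), where √(k − ‖XᵀX̃‖_F²) = ‖sin Θ(R(X), R(X̃))‖_F.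 -/
open Matrix

noncomputable def frobNorm {m n : ℕ} (A : Matrix (Fin m) (Fin n) ℝ) : ℝ :=
  Real.sqrt ((Aᵀ * A).trace)

noncomputable def specNorm {m n : ℕ} (A : Matrix (Fin m) (Fin n) ℝ) : ℝ :=
  ‖(Matrix.toEuclideanLin A).toContinuousLinearMap‖

def headCols {m : ℕ} (r : ℕ) (h : r ≤ m) (A : Matrix (Fin m) (Fin m) ℝ) :
    Matrix (Fin m) (Fin r) ℝ :=
  A.submatrix id (Fin.castLE h)

def tailCols {m : ℕ} (r : ℕ) (h : r ≤ m) (A : Matrix (Fin m) (Fin m) ℝ) :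
    Matrix (Fin m) (Fin (m - r)) ℝ :=
  A.submatrix id fun j => Fin.cast (Nat.add_sub_cancel' h) (Fin.natAdd r j)

/-! Let `Q` be the unitary factor of the polar decomposition of `Xᴴ * X'`. It solves the orthogonal
Procrustes problem: `‖X' - X * Q‖ ≤ √2 ‖sin Θ‖`, because the singular values of `Xᴴ * X'` lie in
`[0, 1]`, where `1 - s ≤ 1 - s²`. It remains to compare `Q` with `V₁ V₁ᴴ + V₂ W V₂ᴴ`. These are
unitary polar factors of `Q * (X'ᴴ * D)` and of `Xᴴ * D`, two matrices at distance at most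
`‖X' - X * Q‖ ‖D‖₂`. On the ranges the two polar factors are unique and Li's bound applies, with
constant `2 / (a + c)`. On the kernels they are arbitrary, so one may choose `W` by solving two
Procrustes problems, one for the left and one for the right null spaces, whose angles are bounded by
Wedin's `sin Θ` theorem with constant `1 / max a c`. Here `a` and `c` bound the nonzero singular
values of `Xᴴ * D` and of `X'ᴴ * D` from below. -/

section FrobeniusNorm

open scoped Matrix.Norms.Frobenius

variable {𝕜 : Type*} [RCLike 𝕜] {κ μ ν ρ τ ω : Type*}

theorem conjTranspose_mul_self_mul_eq_one [Fintype κ] [Fintype ν] [DecidableEq κ]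
    [DecidableEq μ] {X : Matrix ν κ 𝕜} {Y : Matrix κ μ 𝕜}
    (hX : Xᴴ * X = 1) (hY : Yᴴ * Y = 1) : (X * Y)ᴴ * (X * Y) = 1 := by
  rw [conjTranspose_mul, Matrix.mul_assoc, ← Matrix.mul_assoc Xᴴ, hX, Matrix.one_mul, hY]

/-- The diagonal matrix over `𝕜` with real entries `σ`. -/
noncomputable def realDiagonal (𝕜 : Type*) [RCLike 𝕜] [DecidableEq ρ] (σ : ρ → ℝ) : Matrix ρ ρ 𝕜 :=
  diagonal fun i => (σ i : 𝕜)

@[simp]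
theorem conjTranspose_realDiagonal [DecidableEq ρ] (σ : ρ → ℝ) :
    (realDiagonal 𝕜 σ)ᴴ = realDiagonal 𝕜 σ := by
  simp only [realDiagonal, diagonal_conjTranspose]
  congr 1
  ext i
  simp

/-- The thin singular value decomposition `U Σ Vᴴ` with singular values `σ`, in any order. That the
columns of `U` and of `V` are orthonormal and that `σ` is nonnegative are separate hypotheses where
they matter. -/
noncomputable def thinSVD [Fintype ρ] [DecidableEq ρ] (U : Matrix κ ρ 𝕜) (σ : ρ → ℝ)
    (V : Matrix ν ρ 𝕜) : Matrix κ ν 𝕜 :=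
  U * realDiagonal 𝕜 σ * Vᴴ

theorem conjTranspose_thinSVD [Fintype ρ] [DecidableEq ρ] (U : Matrix κ ρ 𝕜) (σ : ρ → ℝ)
    (V : Matrix ν ρ 𝕜) :
    (thinSVD U σ V)ᴴ = thinSVD V σ U := by
  simp only [thinSVD, conjTranspose_mul, conjTranspose_conjTranspose, conjTranspose_realDiagonal,
    Matrix.mul_assoc]

theorem mul_thinSVD [Fintype κ] [Fintype ρ] [DecidableEq ρ] (Q : Matrix μ κ 𝕜)
    (U : Matrix κ ρ 𝕜) (σ : ρ → ℝ) (V : Matrix ν ρ 𝕜) :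
    Q * thinSVD U σ V = thinSVD (Q * U) σ V := by
  simp only [thinSVD, Matrix.mul_assoc]

theorem thinSVD_one [Fintype ρ] [DecidableEq ρ] (U : Matrix κ ρ 𝕜) (V : Matrix ν ρ 𝕜) :
    thinSVD U 1 V = U * Vᴴ := by
  simp [thinSVD, realDiagonal]

variable [Fintype κ] [Fintype μ] [Fintype ν] [Fintype ρ] [Fintype τ] [Fintype ω]

theorem frobenius_norm_sq (A : Matrix μ ν 𝕜) : ‖A‖ ^ 2 = ∑ i, ∑ j, ‖A i j‖ ^ 2 := by
  have h : 0 ≤ ∑ i, ∑ j, ‖A i j‖ ^ 2 := by positivity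
  rw [frobenius_norm_def, ← Real.sqrt_eq_rpow]
  simp only [Real.rpow_ofNat, Real.sq_sqrt h]

theorem frobenius_norm_sq_eq_re_trace (A : Matrix μ ν 𝕜) :
    ‖A‖ ^ 2 = RCLike.re (Aᴴ * A).trace := by
  rw [frobenius_norm_sq, Finset.sum_comm]
  simp only [trace, diag_apply, mul_apply, conjTranspose_apply, RCLike.star_def, RCLike.conj_mul,
    map_sum, ← RCLike.ofReal_pow, RCLike.ofReal_re]

theorem mul_frobenius_norm_le {a : ℝ} (ha : 0 ≤ a) {A B : Matrix μ ν 𝕜}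
    (h : ∀ i j, a * ‖A i j‖ ≤ ‖B i j‖) : a * ‖A‖ ≤ ‖B‖ := by
  refine le_of_sq_le_sq ?_ (norm_nonneg B)
  simp only [mul_pow, frobenius_norm_sq, Finset.mul_sum]
  gcongr with i _ j
  rw [← mul_pow]
  exact pow_le_pow_left₀ (by positivity) (h i j) 2

theorem frobenius_norm_conjTranspose_mul_comm (A : Matrix κ μ 𝕜) (B : Matrix κ ν 𝕜) :
    ‖Aᴴ * B‖ = ‖Bᴴ * A‖ := by
  rw [← frobenius_norm_conjTranspose, conjTranspose_mul, conjTranspose_conjTranspose]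

theorem frobenius_norm_sub_sq_le (A B : Matrix μ ν 𝕜) :
    ‖A - B‖ ^ 2 ≤ 2 * (‖A‖ ^ 2 + ‖B‖ ^ 2) :=
  (pow_le_pow_left₀ (norm_nonneg _) (norm_sub_le A B) 2).trans add_sq_le

theorem frobenius_norm_isometry_mul [DecidableEq κ] {X : Matrix ν κ 𝕜} (hX : Xᴴ * X = 1)
    (A : Matrix κ μ 𝕜) : ‖X * A‖ = ‖A‖ := by
  refine (sq_eq_sq₀ (norm_nonneg _) (norm_nonneg _)).1 ?_
  rw [frobenius_norm_sq_eq_re_trace, frobenius_norm_sq_eq_re_trace, conjTranspose_mul,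
    Matrix.mul_assoc, ← Matrix.mul_assoc Xᴴ, hX, Matrix.one_mul]

theorem frobenius_norm_mul_isometry_conjTranspose [DecidableEq κ] {Z : Matrix ν κ 𝕜}
    (hZ : Zᴴ * Z = 1) (A : Matrix μ κ 𝕜) : ‖A * Zᴴ‖ = ‖A‖ := by
  rw [← frobenius_norm_conjTranspose, conjTranspose_mul, conjTranspose_conjTranspose,
    frobenius_norm_isometry_mul hZ, frobenius_norm_conjTranspose]

theorem frobenius_norm_sq_isometry [DecidableEq κ] {X : Matrix ν κ 𝕜} (hX : Xᴴ * X = 1) :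
    ‖X‖ ^ 2 = Fintype.card κ := by
  rw [frobenius_norm_sq_eq_re_trace, hX, trace_one, RCLike.natCast_re]

/-- The spectral norm, spelled as a function because the norm instance on matrices is the Frobenius
norm here. -/
noncomputable def l2OpNorm [DecidableEq ν] (A : Matrix μ ν 𝕜) : ℝ :=
  ‖(toEuclideanLin A).toContinuousLinearMap‖

theorem l2OpNorm_nonneg [DecidableEq ν] (A : Matrix μ ν 𝕜) : 0 ≤ l2OpNorm A :=
  norm_nonneg _

theorem l2OpNorm_conjTranspose [DecidableEq μ] [DecidableEq ν] (A : Matrix μ ν 𝕜) :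
    l2OpNorm Aᴴ = l2OpNorm A :=
  l2_opNorm_conjTranspose A

theorem frobenius_norm_mul_le_l2OpNorm_mul [DecidableEq κ] (A : Matrix μ κ 𝕜)
    (B : Matrix κ ν 𝕜) : ‖A * B‖ ≤ l2OpNorm A * ‖B‖ := by
  refine le_of_sq_le_sq ?_ (mul_nonneg (l2OpNorm_nonneg A) (norm_nonneg B))
  rw [mul_pow, frobenius_norm_sq, frobenius_norm_sq, Finset.sum_comm,
    Finset.sum_comm (f := fun i j => ‖B i j‖ ^ 2), Finset.mul_sum]
  gcongr with j
  have column_le := pow_le_pow_left₀ (norm_nonneg _)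
    (l2_opNorm_mulVec A (WithLp.toLp 2 (B.col j))) 2
  rw [mul_pow, EuclideanSpace.norm_sq_eq, EuclideanSpace.norm_sq_eq] at column_le
  exact column_le

theorem frobenius_norm_mul_le_mul_l2OpNorm [DecidableEq ν] (A : Matrix μ κ 𝕜) (B : Matrix κ ν 𝕜) :
    ‖A * B‖ ≤ ‖A‖ * l2OpNorm B := by
  classical
  rw [← frobenius_norm_conjTranspose (A * B), conjTranspose_mul, mul_comm, ← l2OpNorm_conjTranspose,
    ← frobenius_norm_conjTranspose A]
  exact frobenius_norm_mul_le_l2OpNorm_mul Bᴴ Aᴴ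

theorem mul_norm_le_norm_realDiagonal_mul [DecidableEq ρ] {σ : ρ → ℝ} {a : ℝ} (ha : 0 ≤ a)
    (hσ : ∀ i, a ≤ σ i) (M : Matrix ρ ν 𝕜) : a * ‖M‖ ≤ ‖realDiagonal 𝕜 σ * M‖ := by
  refine mul_frobenius_norm_le ha fun i j => ?_
  rw [realDiagonal, diagonal_mul, norm_mul, RCLike.norm_of_nonneg (ha.trans (hσ i))]
  gcongr
  exact hσ i

theorem mul_norm_le_norm_mul_realDiagonal [DecidableEq ρ] {σ : ρ → ℝ} {a : ℝ} (ha : 0 ≤ a)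
    (hσ : ∀ i, a ≤ σ i) (M : Matrix μ ρ 𝕜) : a * ‖M‖ ≤ ‖M * realDiagonal 𝕜 σ‖ := by
  rw [← frobenius_norm_conjTranspose M, ← frobenius_norm_conjTranspose (M * _), conjTranspose_mul,
    conjTranspose_realDiagonal]
  exact mul_norm_le_norm_realDiagonal_mul ha hσ Mᴴ

theorem add_mul_norm_le_norm_sylvester [DecidableEq ρ] [DecidableEq τ] {σ : ρ → ℝ} {σ' : τ → ℝ}
    {a c : ℝ} (ha : 0 ≤ a) (hc : 0 ≤ c) (hσ : ∀ i, a ≤ σ i) (hσ' : ∀ i, c ≤ σ' i)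
    (K : Matrix ρ τ 𝕜) :
    (a + c) * ‖K‖ ≤ ‖realDiagonal 𝕜 σ * K + K * realDiagonal 𝕜 σ'‖ := by
  refine mul_frobenius_norm_le (add_nonneg ha hc) fun i j => ?_
  have entry : (realDiagonal 𝕜 σ * K + K * realDiagonal 𝕜 σ') i j =
      ((σ i + σ' j : ℝ) : 𝕜) * K i j := by
    simp only [realDiagonal, Matrix.add_apply, diagonal_mul, mul_diagonal]
    push_cast
    ring
  have le_sum : a + c ≤ σ i + σ' j := add_le_add (hσ i) (hσ' j)
  rw [entry, norm_mul, RCLike.norm_of_nonneg ((add_nonneg ha hc).trans le_sum)]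
  gcongr

/-- The columns of `U₁` and `U₂` together form an orthonormal basis, i.e. the block row `[U₁ U₂]`
is a unitary matrix. -/
structure IsUnitarySplit [DecidableEq κ] [DecidableEq ρ] [DecidableEq τ] (U₁ : Matrix κ ρ 𝕜)
    (U₂ : Matrix κ τ 𝕜) : Prop where
  isometry_left : U₁ᴴ * U₁ = 1
  isometry_right : U₂ᴴ * U₂ = 1
  resolution : U₁ * U₁ᴴ + U₂ * U₂ᴴ = 1

namespace IsUnitarySplit

variable [DecidableEq κ] [DecidableEq ν] [DecidableEq ρ] [DecidableEq τ] [DecidableEq ω]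
  {U₁ U₁' : Matrix κ ρ 𝕜} {U₂ U₂' : Matrix κ τ 𝕜} {V₁ V₁' : Matrix ν ρ 𝕜} {V₂ V₂' : Matrix ν ω 𝕜}

theorem symm (hU : IsUnitarySplit U₁ U₂) : IsUnitarySplit U₂ U₁ :=
  ⟨hU.isometry_right, hU.isometry_left, by rw [add_comm, hU.resolution]⟩

theorem left_mul (hU : IsUnitarySplit U₁ U₂) {Q : Matrix κ κ 𝕜} (hQ : Qᴴ * Q = 1) :
    IsUnitarySplit (Q * U₁) (Q * U₂) where
  isometry_left := conjTranspose_mul_self_mul_eq_one hQ hU.isometry_left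
  isometry_right := conjTranspose_mul_self_mul_eq_one hQ hU.isometry_right
  resolution := by
    calc Q * U₁ * (Q * U₁)ᴴ + Q * U₂ * (Q * U₂)ᴴ
      _ = Q * (U₁ * U₁ᴴ + U₂ * U₂ᴴ) * Qᴴ := by
        simp only [conjTranspose_mul, Matrix.mul_add, Matrix.add_mul, Matrix.mul_assoc]
      _ = 1 := by rw [hU.resolution, Matrix.mul_one, mul_eq_one_comm.1 hQ]

theorem conjTranspose_mul_eq_zero (hU : IsUnitarySplit U₁ U₂) : U₁ᴴ * U₂ = 0 := by
  have doubled : U₁ᴴ * U₂ = U₁ᴴ * U₂ + U₁ᴴ * U₂ := by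
    calc U₁ᴴ * U₂
      _ = U₁ᴴ * (U₁ * U₁ᴴ + U₂ * U₂ᴴ) * U₂ := by rw [hU.resolution, Matrix.mul_one]
      _ = U₁ᴴ * U₁ * (U₁ᴴ * U₂) + U₁ᴴ * U₂ * (U₂ᴴ * U₂) := by
        simp only [Matrix.mul_add, Matrix.add_mul, Matrix.mul_assoc]
      _ = U₁ᴴ * U₂ + U₁ᴴ * U₂ := by
        rw [hU.isometry_left, hU.isometry_right, Matrix.one_mul, Matrix.mul_one]
  exact left_eq_add.1 doubled

theorem norm_sq_conjTranspose_mul_add (hU : IsUnitarySplit U₁ U₂) (A : Matrix κ μ 𝕜) :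
    ‖U₁ᴴ * A‖ ^ 2 + ‖U₂ᴴ * A‖ ^ 2 = ‖A‖ ^ 2 := by
  have gram : (U₁ᴴ * A)ᴴ * (U₁ᴴ * A) + (U₂ᴴ * A)ᴴ * (U₂ᴴ * A) = Aᴴ * A := by
    calc (U₁ᴴ * A)ᴴ * (U₁ᴴ * A) + (U₂ᴴ * A)ᴴ * (U₂ᴴ * A)
      _ = Aᴴ * (U₁ * U₁ᴴ + U₂ * U₂ᴴ) * A := by
        simp only [conjTranspose_mul, conjTranspose_conjTranspose, Matrix.mul_add, Matrix.add_mul,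
          Matrix.mul_assoc]
      _ = Aᴴ * A := by rw [hU.resolution, Matrix.mul_one]
  simp only [frobenius_norm_sq_eq_re_trace, ← map_add, ← trace_add, gram]

theorem norm_sq_mul_add (hU : IsUnitarySplit U₁ U₂) (A : Matrix μ κ 𝕜) :
    ‖A * U₁‖ ^ 2 + ‖A * U₂‖ ^ 2 = ‖A‖ ^ 2 := by
  simpa only [← conjTranspose_mul, frobenius_norm_conjTranspose] using
    hU.norm_sq_conjTranspose_mul_add Aᴴ

theorem norm_mul_right_le (hU : IsUnitarySplit U₁ U₂) (A : Matrix μ κ 𝕜) : ‖A * U₂‖ ≤ ‖A‖ := by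
  refine le_of_sq_le_sq ?_ (norm_nonneg A)
  rw [← hU.norm_sq_mul_add A]
  exact le_add_of_nonneg_left (sq_nonneg _)

theorem norm_sq_eq_sum_blocks (hU : IsUnitarySplit U₁ U₂) (hV : IsUnitarySplit V₁ V₂)
    (E : Matrix κ ν 𝕜) :
    ‖E‖ ^ 2 = ‖U₁ᴴ * E * V₁‖ ^ 2 + ‖U₁ᴴ * E * V₂‖ ^ 2 +
      (‖U₂ᴴ * E * V₁‖ ^ 2 + ‖U₂ᴴ * E * V₂‖ ^ 2) := by
  rw [hV.norm_sq_mul_add, hV.norm_sq_mul_add, hU.norm_sq_conjTranspose_mul_add]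

theorem norm_conjTranspose_left_mul_right (hU : IsUnitarySplit U₁ U₂)
    (hU' : IsUnitarySplit U₁' U₂') : ‖U₁ᴴ * U₂'‖ = ‖U₂ᴴ * U₁'‖ := by
  refine (sq_eq_sq₀ (norm_nonneg _) (norm_nonneg _)).1 ?_
  have rows := hU.norm_sq_conjTranspose_mul_add U₁'
  have cols := hU'.norm_sq_mul_add U₁ᴴ
  rw [frobenius_norm_sq_isometry hU'.isometry_left] at rows
  rw [frobenius_norm_conjTranspose, frobenius_norm_sq_isometry hU.isometry_left] at cols
  linarith

theorem card_sub_norm_sq_conjTranspose_right_mul_right (hU : IsUnitarySplit U₁ U₂)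
    (hU' : IsUnitarySplit U₁' U₂') :
    (Fintype.card τ : ℝ) - ‖U₂ᴴ * U₂'‖ ^ 2 = ‖U₁ᴴ * U₂'‖ ^ 2 := by
  rw [← frobenius_norm_sq_isometry hU'.isometry_right, ← hU.norm_sq_conjTranspose_mul_add U₂',
    add_sub_cancel_right]

end IsUnitarySplit

section SingularSubspaces

variable [DecidableEq ρ] [DecidableEq τ] [DecidableEq ω]
  {U₁ U₁' : Matrix κ ρ 𝕜} {U₂ U₂' : Matrix κ τ 𝕜} {V₁ V₁' : Matrix ν ρ 𝕜} {V₂ V₂' : Matrix ν ω 𝕜}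
  {σ σ' : ρ → ℝ} {a c : ℝ}

theorem norm_sq_thinSVD_sub [DecidableEq κ] [DecidableEq ν] (hU : IsUnitarySplit U₁ U₂)
    (hV' : IsUnitarySplit V₁' V₂') :
    ‖thinSVD U₁ σ V₁ - thinSVD U₁' σ' V₁'‖ ^ 2 =
      ‖realDiagonal 𝕜 σ * (V₁ᴴ * V₁') - U₁ᴴ * U₁' * realDiagonal 𝕜 σ'‖ ^ 2 +
        ‖realDiagonal 𝕜 σ * (V₁ᴴ * V₂')‖ ^ 2 + ‖U₂ᴴ * U₁' * realDiagonal 𝕜 σ'‖ ^ 2 := by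
  have row₁ : U₁ᴴ * (thinSVD U₁ σ V₁ - thinSVD U₁' σ' V₁') =
      realDiagonal 𝕜 σ * V₁ᴴ - U₁ᴴ * U₁' * realDiagonal 𝕜 σ' * V₁'ᴴ := by
    simp only [thinSVD, Matrix.mul_sub, ← Matrix.mul_assoc, hU.isometry_left, Matrix.one_mul]
  have row₂ : U₂ᴴ * (thinSVD U₁ σ V₁ - thinSVD U₁' σ' V₁') =
      -(U₂ᴴ * U₁' * realDiagonal 𝕜 σ' * V₁'ᴴ) := by
    simp only [thinSVD, Matrix.mul_sub, ← Matrix.mul_assoc, hU.symm.conjTranspose_mul_eq_zero,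
      Matrix.zero_mul, zero_sub]
  rw [hU.norm_sq_eq_sum_blocks hV', row₁, row₂]
  simp only [Matrix.sub_mul, Matrix.neg_mul, Matrix.mul_assoc, hV'.isometry_left,
    hV'.conjTranspose_mul_eq_zero, Matrix.mul_one, Matrix.mul_zero, sub_zero, norm_neg, norm_zero]
  ring

theorem mul_norm_sin_right_le_norm_thinSVD_sub [DecidableEq ν] (ha : 0 ≤ a)
    (hσ : ∀ i, a ≤ σ i) (hU₁ : U₁ᴴ * U₁ = 1) (hV' : IsUnitarySplit V₁' V₂') :
    a * ‖V₁ᴴ * V₂'‖ ≤ ‖thinSVD U₁ σ V₁ - thinSVD U₁' σ' V₁'‖ := by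
  have mul_right : (thinSVD U₁ σ V₁ - thinSVD U₁' σ' V₁') * V₂' =
      U₁ * (realDiagonal 𝕜 σ * (V₁ᴴ * V₂')) := by
    simp only [thinSVD, Matrix.sub_mul, Matrix.mul_assoc, hV'.conjTranspose_mul_eq_zero,
      Matrix.mul_zero, sub_zero]
  calc a * ‖V₁ᴴ * V₂'‖
    _ ≤ ‖realDiagonal 𝕜 σ * (V₁ᴴ * V₂')‖ := mul_norm_le_norm_realDiagonal_mul ha hσ _
    _ = ‖(thinSVD U₁ σ V₁ - thinSVD U₁' σ' V₁') * V₂'‖ := by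
      rw [mul_right, frobenius_norm_isometry_mul hU₁]
    _ ≤ ‖thinSVD U₁ σ V₁ - thinSVD U₁' σ' V₁'‖ := hV'.norm_mul_right_le _

theorem max_mul_norm_sin_right_le_norm_thinSVD_sub [DecidableEq ν] (ha : 0 ≤ a) (hc : 0 ≤ c)
    (hσ : ∀ i, a ≤ σ i) (hσ' : ∀ i, c ≤ σ' i) (hU₁ : U₁ᴴ * U₁ = 1) (hU₁' : U₁'ᴴ * U₁' = 1)
    (hV : IsUnitarySplit V₁ V₂) (hV' : IsUnitarySplit V₁' V₂') :
    max a c * ‖V₁ᴴ * V₂'‖ ≤ ‖thinSVD U₁ σ V₁ - thinSVD U₁' σ' V₁'‖ := by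
  rw [max_mul_of_nonneg _ _ (norm_nonneg _)]
  refine max_le (mul_norm_sin_right_le_norm_thinSVD_sub ha hσ hU₁ hV') ?_
  rw [hV.norm_conjTranspose_left_mul_right hV', frobenius_norm_conjTranspose_mul_comm,
    norm_sub_rev]
  exact mul_norm_sin_right_le_norm_thinSVD_sub hc hσ' hU₁' hV

theorem max_mul_norm_sin_left_le_norm_thinSVD_sub [DecidableEq κ] (ha : 0 ≤ a) (hc : 0 ≤ c)
    (hσ : ∀ i, a ≤ σ i) (hσ' : ∀ i, c ≤ σ' i) (hU : IsUnitarySplit U₁ U₂)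
    (hU' : IsUnitarySplit U₁' U₂') (hV₁ : V₁ᴴ * V₁ = 1) (hV₁' : V₁'ᴴ * V₁' = 1) :
    max a c * ‖U₁ᴴ * U₂'‖ ≤ ‖thinSVD U₁ σ V₁ - thinSVD U₁' σ' V₁'‖ := by
  rw [← frobenius_norm_conjTranspose (_ - _), conjTranspose_sub, conjTranspose_thinSVD,
    conjTranspose_thinSVD]
  exact max_mul_norm_sin_right_le_norm_thinSVD_sub ha hc hσ hσ' hV₁ hV₁' hU hU'

theorem sq_add_mul_norm_sq_sub_le (ha : 0 ≤ a) (hc : 0 ≤ c) (hσ : ∀ i, a ≤ σ i)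
    (hσ' : ∀ i, c ≤ σ' i) (M N : Matrix ρ ρ 𝕜) :
    (a + c) ^ 2 * ‖M - N‖ ^ 2 ≤
      2 * (‖realDiagonal 𝕜 σ * M - N * realDiagonal 𝕜 σ'‖ ^ 2 +
        ‖realDiagonal 𝕜 σ * N - M * realDiagonal 𝕜 σ'‖ ^ 2) := by
  calc (a + c) ^ 2 * ‖M - N‖ ^ 2
    _ = ((a + c) * ‖M - N‖) ^ 2 := (mul_pow _ _ _).symm
    _ ≤ ‖realDiagonal 𝕜 σ * (M - N) + (M - N) * realDiagonal 𝕜 σ'‖ ^ 2 := by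
      gcongr
      exact add_mul_norm_le_norm_sylvester ha hc hσ hσ' (M - N)
    _ = ‖realDiagonal 𝕜 σ * M - N * realDiagonal 𝕜 σ' -
          (realDiagonal 𝕜 σ * N - M * realDiagonal 𝕜 σ')‖ ^ 2 := by
      rw [Matrix.mul_sub, Matrix.sub_mul]
      congr 2
      abel
    _ ≤ _ := frobenius_norm_sub_sq_le _ _

theorem norm_sq_add_le_norm_sq_thinSVD_sub [DecidableEq κ] [DecidableEq ν] (ha : 0 ≤ a)
    (hc : 0 ≤ c) (hσ : ∀ i, a ≤ σ i) (hσ' : ∀ i, c ≤ σ' i) (hU : IsUnitarySplit U₁ U₂)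
    (hV' : IsUnitarySplit V₁' V₂') :
    ‖realDiagonal 𝕜 σ * (V₁ᴴ * V₁') - U₁ᴴ * U₁' * realDiagonal 𝕜 σ'‖ ^ 2 +
        a ^ 2 * ‖V₁ᴴ * V₂'‖ ^ 2 + c ^ 2 * ‖U₂ᴴ * U₁'‖ ^ 2 ≤
      ‖thinSVD U₁ σ V₁ - thinSVD U₁' σ' V₁'‖ ^ 2 := by
  rw [norm_sq_thinSVD_sub hU hV', ← mul_pow, ← mul_pow]
  gcongr
  · exact mul_norm_le_norm_realDiagonal_mul ha hσ _
  · exact mul_norm_le_norm_mul_realDiagonal hc hσ' _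

theorem norm_sq_polar_sub [DecidableEq κ] [DecidableEq ν] (hU : IsUnitarySplit U₁ U₂)
    (hV' : IsUnitarySplit V₁' V₂') :
    ‖U₁ * V₁ᴴ - U₁' * V₁'ᴴ‖ ^ 2 =
      ‖V₁ᴴ * V₁' - U₁ᴴ * U₁'‖ ^ 2 + ‖V₁ᴴ * V₂'‖ ^ 2 + ‖U₂ᴴ * U₁'‖ ^ 2 := by
  have blocks := norm_sq_thinSVD_sub (V₁ := V₁) (U₁' := U₁') (σ := 1) (σ' := 1) hU hV'
  simpa [thinSVD_one, realDiagonal] using blocks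

theorem add_mul_norm_polar_sub_le [DecidableEq κ] [DecidableEq ν] (ha : 0 ≤ a) (hc : 0 ≤ c)
    (hσ : ∀ i, a ≤ σ i) (hσ' : ∀ i, c ≤ σ' i) (hU : IsUnitarySplit U₁ U₂)
    (hU' : IsUnitarySplit U₁' U₂') (hV : IsUnitarySplit V₁ V₂) (hV' : IsUnitarySplit V₁' V₂') :
    (a + c) * ‖U₁ * V₁ᴴ - U₁' * V₁'ᴴ‖ ≤ 2 * ‖thinSVD U₁ σ V₁ - thinSVD U₁' σ' V₁'‖ := by
  set E := thinSVD U₁ σ V₁ - thinSVD U₁' σ' V₁'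
  set S := realDiagonal 𝕜 σ
  set S' := realDiagonal 𝕜 σ'
  set M := V₁ᴴ * V₁' with hM
  set N := U₁ᴴ * U₁' with hN
  -- Exchanging the two decompositions swaps the weights `a ^ 2` and `c ^ 2`, so the two estimates
  -- add up to equal weights, and their leading blocks to a Sylvester equation for `M - N`.
  have blocks : ‖S * M - N * S'‖ ^ 2 + a ^ 2 * ‖V₁ᴴ * V₂'‖ ^ 2 + c ^ 2 * ‖U₂ᴴ * U₁'‖ ^ 2 ≤
      ‖E‖ ^ 2 := norm_sq_add_le_norm_sq_thinSVD_sub ha hc hσ hσ' hU hV'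
  have swapped_blocks :
      ‖S * N - M * S'‖ ^ 2 + c ^ 2 * ‖V₁ᴴ * V₂'‖ ^ 2 + a ^ 2 * ‖U₂ᴴ * U₁'‖ ^ 2 ≤ ‖E‖ ^ 2 := by
    have swapped := norm_sq_add_le_norm_sq_thinSVD_sub (U₁' := U₁) (V₁ := V₁') hc ha hσ' hσ hU' hV
    have head_block : ‖S * N - M * S'‖ = ‖S' * (V₁'ᴴ * V₁) - U₁'ᴴ * U₁ * S‖ := by
      rw [← frobenius_norm_conjTranspose, norm_sub_rev]
      simp [S, S', hM, hN, Matrix.mul_assoc, conjTranspose_sub]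
    rwa [norm_sub_rev (thinSVD _ _ _), ← head_block, hV'.norm_conjTranspose_left_mul_right hV,
      frobenius_norm_conjTranspose_mul_comm V₂', ← hU'.norm_conjTranspose_left_mul_right hU,
      frobenius_norm_conjTranspose_mul_comm U₁'] at swapped
  refine le_of_sq_le_sq ?_ (by positivity)
  calc ((a + c) * ‖U₁ * V₁ᴴ - U₁' * V₁'ᴴ‖) ^ 2
    _ = (a + c) ^ 2 * ‖M - N‖ ^ 2 +
        (a + c) ^ 2 * (‖V₁ᴴ * V₂'‖ ^ 2 + ‖U₂ᴴ * U₁'‖ ^ 2) := by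
      rw [mul_pow, norm_sq_polar_sub hU hV']
      ring
    _ ≤ 2 * (‖S * M - N * S'‖ ^ 2 + ‖S * N - M * S'‖ ^ 2) +
        2 * (a ^ 2 + c ^ 2) * (‖V₁ᴴ * V₂'‖ ^ 2 + ‖U₂ᴴ * U₁'‖ ^ 2) := by
      refine add_le_add (sq_add_mul_norm_sq_sub_le ha hc hσ hσ' M N) ?_
      gcongr
      exact add_sq_le
    _ ≤ (2 * ‖E‖) ^ 2 := by linarith

end SingularSubspaces

section SingularValueDecomposition

variable [DecidableEq κ]

theorem exists_isometry_mul_realDiagonal {B : Matrix κ κ 𝕜} (hB : (Bᴴ * B).IsDiag) :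
    ∃ (P : Matrix κ κ 𝕜) (σ : κ → ℝ), Pᴴ * P = 1 ∧ (∀ i, 0 ≤ σ i) ∧ B = P * realDiagonal 𝕜 σ := by
  let column (i : κ) : EuclideanSpace 𝕜 κ := WithLp.toLp 2 (B.col i)
  let direction (i : κ) : EuclideanSpace 𝕜 κ := ((‖column i‖ : 𝕜)⁻¹) • column i
  have column_orthogonal {i j : κ} (hij : i ≠ j) : inner 𝕜 (column i) (column j) = 0 := by
    rw [← hB hij, mul_apply', EuclideanSpace.inner_eq_star_dotProduct, dotProduct_comm]
    rfl
  have direction_orthonormal : Orthonormal 𝕜 (Set.domRestrict {i | column i ≠ 0} direction) := by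
    refine ⟨fun i => norm_smul_inv_norm i.2, fun i j hij => ?_⟩
    simp only [Set.domRestrict_apply, direction, inner_smul_left, inner_smul_right,
      column_orthogonal (Subtype.coe_injective.ne hij), mul_zero]
  obtain ⟨basis, basis_eq⟩ :=
    direction_orthonormal.exists_orthonormalBasis_extension_of_card_eq finrank_euclideanSpace
  refine ⟨(EuclideanSpace.basisFun κ 𝕜).toBasis.toMatrix basis, fun i => ‖column i‖,
    mem_unitaryGroup_iff'.1
      ((EuclideanSpace.basisFun κ 𝕜).toMatrix_orthonormalBasis_mem_unitary basis),
    fun i => norm_nonneg _, ?_⟩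
  ext x i
  rw [realDiagonal, mul_diagonal]
  change column i x = basis i x * _
  by_cases hi : column i = 0
  · simp [hi]
  · have norm_ne_zero : (‖column i‖ : 𝕜) ≠ 0 := by simpa using hi
    rw [basis_eq i hi]
    simp only [direction, PiLp.smul_apply, smul_eq_mul]
    field_simp

theorem exists_eq_thinSVD (A : Matrix κ κ 𝕜) :
    ∃ (P U : Matrix κ κ 𝕜) (σ : κ → ℝ),
      Pᴴ * P = 1 ∧ Uᴴ * U = 1 ∧ (∀ i, 0 ≤ σ i) ∧ A = thinSVD P σ U := by
  have gram_isHermitian : (Aᴴ * A).IsHermitian := isHermitian_conjTranspose_mul_self A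
  let U : Matrix κ κ 𝕜 := ↑gram_isHermitian.eigenvectorUnitary
  have hU : Uᴴ * U = 1 := mem_unitaryGroup_iff'.1 gram_isHermitian.eigenvectorUnitary.2
  have gram_isDiag : ((A * U)ᴴ * (A * U)).IsDiag := by
    have diagonalized := gram_isHermitian.conjStarAlgAut_star_eigenvectorUnitary
    rw [Unitary.conjStarAlgAut_star_apply] at diagonalized
    rw [conjTranspose_mul, Matrix.mul_assoc, ← Matrix.mul_assoc Aᴴ, ← Matrix.mul_assoc Uᴴ]
    exact diagonalized ▸ isDiag_diagonal _
  obtain ⟨P, σ, hP, hσ, hAU⟩ := exists_isometry_mul_realDiagonal gram_isDiag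
  refine ⟨P, U, σ, hP, hU, hσ, ?_⟩
  rw [thinSVD, ← hAU, Matrix.mul_assoc, mul_eq_one_comm.1 hU, Matrix.mul_one]

end SingularValueDecomposition

section Procrustes

variable [DecidableEq κ]

open scoped ComplexOrder in
theorem norm_sub_sq_le_of_conjTranspose_mul_eq_realDiagonal {Z Z' : Matrix ν κ 𝕜} {σ : κ → ℝ}
    (hZ : Zᴴ * Z = 1) (hZ' : Z'ᴴ * Z' = 1) (hσ : ∀ i, 0 ≤ σ i)
    (h : Zᴴ * Z' = realDiagonal 𝕜 σ) :
    ‖Z' - Z‖ ^ 2 ≤ 2 * (Fintype.card κ - ‖Zᴴ * Z'‖ ^ 2) := by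
  have gram : (Z' - Z)ᴴ * (Z' - Z) = realDiagonal 𝕜 fun i => 2 * (1 - σ i) := by
    have h_swap : Z'ᴴ * Z = realDiagonal 𝕜 σ := by
      rw [← conjTranspose_realDiagonal, ← h, conjTranspose_mul, conjTranspose_conjTranspose]
    rw [conjTranspose_sub, Matrix.sub_mul, Matrix.mul_sub, Matrix.mul_sub, hZ, hZ', h, h_swap]
    ext i j
    obtain rfl | hij := eq_or_ne i j
    · simp only [realDiagonal, Matrix.sub_apply, one_apply_eq, diagonal_apply_eq]
      push_cast
      ring
    · simp [realDiagonal, hij]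
  have σ_le_one (i : κ) : σ i ≤ 1 := by
    have diag_nonneg := (posSemidef_conjTranspose_mul_self (Z' - Z)).diag_nonneg (i := i)
    rw [gram, realDiagonal, diagonal_apply_eq, RCLike.ofReal_nonneg] at diag_nonneg
    linarith
  have norm_sq_diagonal : ‖Zᴴ * Z'‖ ^ 2 = ∑ i, σ i ^ 2 := by
    rw [h, realDiagonal, frobenius_norm_diagonal, EuclideanSpace.norm_sq_eq]
    simp
  calc ‖Z' - Z‖ ^ 2
    _ = ∑ i, 2 * (1 - σ i) := by
      rw [frobenius_norm_sq_eq_re_trace, gram, realDiagonal, trace_diagonal, map_sum]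
      simp only [RCLike.ofReal_re]
    _ ≤ ∑ i, 2 * (1 - σ i ^ 2) := by
      gcongr with i
      exact pow_le_of_le_one (hσ i) (σ_le_one i) two_ne_zero
    _ = 2 * (Fintype.card κ - ‖Zᴴ * Z'‖ ^ 2) := by
      rw [← Finset.mul_sum, Finset.sum_sub_distrib, norm_sq_diagonal]
      simp

theorem exists_unitary_norm_sub_mul_le_sqrt {X X' : Matrix ν κ 𝕜} (hX : Xᴴ * X = 1)
    (hX' : X'ᴴ * X' = 1) :
    ∃ Q : Matrix κ κ 𝕜, Qᴴ * Q = 1 ∧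
      ‖X' - X * Q‖ ≤ √2 * √(Fintype.card κ - ‖Xᴴ * X'‖ ^ 2) := by
  obtain ⟨P, U, σ, hP, hU, hσ, svd⟩ := exists_eq_thinSVD (Xᴴ * X')
  have cross : (X * P)ᴴ * (X' * U) = realDiagonal 𝕜 σ := by
    calc (X * P)ᴴ * (X' * U)
      _ = Pᴴ * (Xᴴ * X') * U := by simp only [conjTranspose_mul, Matrix.mul_assoc]
      _ = Pᴴ * P * realDiagonal 𝕜 σ * (Uᴴ * U) := by
        rw [svd, thinSVD]
        simp only [Matrix.mul_assoc]
      _ = realDiagonal 𝕜 σ := by rw [hP, hU, Matrix.one_mul, Matrix.mul_one]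
  have norm_cross : ‖(X * P)ᴴ * (X' * U)‖ = ‖Xᴴ * X'‖ := by
    rw [cross, svd, thinSVD, frobenius_norm_mul_isometry_conjTranspose hU,
      frobenius_norm_isometry_mul hP]
  have rotated : X' - X * (P * Uᴴ) = (X' * U - X * P) * Uᴴ := by
    rw [Matrix.sub_mul, Matrix.mul_assoc X', mul_eq_one_comm.1 hU, Matrix.mul_one,
      Matrix.mul_assoc]
  refine ⟨P * Uᴴ, conjTranspose_mul_self_mul_eq_one hP ?_, ?_⟩
  · rw [conjTranspose_conjTranspose, mul_eq_one_comm.1 hU]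
  · rw [← Real.sqrt_mul zero_le_two, rotated, frobenius_norm_mul_isometry_conjTranspose hU,
      ← norm_cross]
    exact Real.le_sqrt_of_sq_le (norm_sub_sq_le_of_conjTranspose_mul_eq_realDiagonal
      (conjTranspose_mul_self_mul_eq_one hX hP) (conjTranspose_mul_self_mul_eq_one hX' hU) hσ cross)

variable [DecidableEq ν] [DecidableEq ρ] [DecidableEq τ]
  {U₁ U₁' : Matrix κ ρ 𝕜} {U₂ U₂' : Matrix κ τ 𝕜} {V₁ V₁' : Matrix ν ρ 𝕜} {V₂ V₂' : Matrix ν τ 𝕜}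

theorem IsUnitarySplit.exists_unitary_norm_sub_mul_le (hU : IsUnitarySplit U₁ U₂)
    (hU' : IsUnitarySplit U₁' U₂') :
    ∃ W : Matrix τ τ 𝕜, Wᴴ * W = 1 ∧ ‖U₂' - U₂ * W‖ ≤ √2 * ‖U₁ᴴ * U₂'‖ := by
  obtain ⟨W, hW, le⟩ := exists_unitary_norm_sub_mul_le_sqrt hU.isometry_right hU'.isometry_right
  rw [hU.card_sub_norm_sq_conjTranspose_right_mul_right hU', Real.sqrt_sq (norm_nonneg _)] at le
  exact ⟨W, hW, le⟩

theorem IsUnitarySplit.exists_unitary_norm_mul_conjTranspose_sub_le (hU : IsUnitarySplit U₁ U₂)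
    (hU' : IsUnitarySplit U₁' U₂') (hV : IsUnitarySplit V₁ V₂) (hV' : IsUnitarySplit V₁' V₂') :
    ∃ W : Matrix τ τ 𝕜, Wᴴ * W = 1 ∧
      ‖U₂' * V₂'ᴴ - U₂ * W * V₂ᴴ‖ ≤ √2 * (‖U₁ᴴ * U₂'‖ + ‖V₁ᴴ * V₂'‖) := by
  obtain ⟨W₁, hW₁, le₁⟩ := hU.exists_unitary_norm_sub_mul_le hU'
  obtain ⟨W₂, hW₂, le₂⟩ := hV.exists_unitary_norm_sub_mul_le hV'
  have telescope : U₂' * V₂'ᴴ - U₂ * (W₁ * W₂ᴴ) * V₂ᴴ =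
      (U₂' - U₂ * W₁) * V₂'ᴴ + U₂ * (W₁ * (V₂' - V₂ * W₂)ᴴ) := by
    simp only [Matrix.sub_mul, conjTranspose_sub, conjTranspose_mul, Matrix.mul_sub,
      Matrix.mul_assoc]
    abel
  refine ⟨W₁ * W₂ᴴ, conjTranspose_mul_self_mul_eq_one hW₁ ?_, ?_⟩
  · rw [conjTranspose_conjTranspose, mul_eq_one_comm.1 hW₂]
  calc ‖U₂' * V₂'ᴴ - U₂ * (W₁ * W₂ᴴ) * V₂ᴴ‖
    _ ≤ ‖U₂' - U₂ * W₁‖ + ‖V₂' - V₂ * W₂‖ := by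
      rw [telescope]
      refine (norm_add_le _ _).trans_eq ?_
      rw [frobenius_norm_mul_isometry_conjTranspose hV'.isometry_right,
        frobenius_norm_isometry_mul hU.isometry_right, frobenius_norm_isometry_mul hW₁,
        frobenius_norm_conjTranspose]
    _ ≤ √2 * (‖U₁ᴴ * U₂'‖ + ‖V₁ᴴ * V₂'‖) := by
      rw [mul_add]
      exact add_le_add le₁ le₂

end Procrustes

section RankDeficient

variable [DecidableEq κ] [DecidableEq ρ] [DecidableEq τ]

theorem exists_unitary_norm_polar_sub_le [DecidableEq ν] {U₁ U₁' : Matrix κ ρ 𝕜}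
    {U₂ U₂' : Matrix κ τ 𝕜} {V₁ V₁' : Matrix ν ρ 𝕜} {V₂ V₂' : Matrix ν τ 𝕜} {σ σ' : ρ → ℝ}
    {a c : ℝ} (ha : 0 < a) (hc : 0 < c) (hσ : ∀ i, a ≤ σ i) (hσ' : ∀ i, c ≤ σ' i)
    (hU : IsUnitarySplit U₁ U₂) (hU' : IsUnitarySplit U₁' U₂') (hV : IsUnitarySplit V₁ V₂)
    (hV' : IsUnitarySplit V₁' V₂') :
    ∃ W : Matrix τ τ 𝕜, Wᴴ * W = 1 ∧
      ‖U₁' * V₁'ᴴ + U₂' * V₂'ᴴ - (U₁ * V₁ᴴ + U₂ * W * V₂ᴴ)‖ ≤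
        (2 / (a + c) + 2 * √2 / max a c) * ‖thinSVD U₁ σ V₁ - thinSVD U₁' σ' V₁'‖ := by
  set ε := ‖thinSVD U₁ σ V₁ - thinSVD U₁' σ' V₁'‖
  have hmax : 0 < max a c := lt_max_of_lt_left ha
  have range_part : ‖U₁ * V₁ᴴ - U₁' * V₁'ᴴ‖ ≤ 2 * ε / (a + c) := by
    rw [le_div_iff₀' (add_pos ha hc)]
    exact add_mul_norm_polar_sub_le ha.le hc.le hσ hσ' hU hU' hV hV'
  have sin_left : ‖U₁ᴴ * U₂'‖ ≤ ε / max a c := by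
    rw [le_div_iff₀' hmax]
    exact max_mul_norm_sin_left_le_norm_thinSVD_sub ha.le hc.le hσ hσ' hU hU' hV.isometry_left
      hV'.isometry_left
  have sin_right : ‖V₁ᴴ * V₂'‖ ≤ ε / max a c := by
    rw [le_div_iff₀' hmax]
    exact max_mul_norm_sin_right_le_norm_thinSVD_sub ha.le hc.le hσ hσ' hU.isometry_left
      hU'.isometry_left hV hV'
  obtain ⟨W, hW, kernel_part⟩ := hU.exists_unitary_norm_mul_conjTranspose_sub_le hU' hV hV'
  refine ⟨W, hW, ?_⟩
  calc ‖U₁' * V₁'ᴴ + U₂' * V₂'ᴴ - (U₁ * V₁ᴴ + U₂ * W * V₂ᴴ)‖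
    _ ≤ ‖U₁' * V₁'ᴴ - U₁ * V₁ᴴ‖ + ‖U₂' * V₂'ᴴ - U₂ * W * V₂ᴴ‖ := by
      rw [add_sub_add_comm]
      exact norm_add_le _ _
    _ ≤ 2 * ε / (a + c) + √2 * (ε / max a c + ε / max a c) := by
      rw [norm_sub_rev (U₁' * _)]
      refine add_le_add range_part (kernel_part.trans ?_)
      gcongr
    _ = (2 / (a + c) + 2 * √2 / max a c) * ε := by ring

theorem norm_conjTranspose_mul_sub_mul_le [DecidableEq μ] {Q : Matrix κ κ 𝕜} (hQ : Qᴴ * Q = 1)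
    (X X' : Matrix ν κ 𝕜) (D : Matrix ν μ 𝕜) :
    ‖Xᴴ * D - Q * (X'ᴴ * D)‖ ≤ ‖X' - X * Q‖ * l2OpNorm D := by
  have rotated : Xᴴ * D - Q * (X'ᴴ * D) = -(Q * (X' - X * Q)ᴴ * D) := by
    calc Xᴴ * D - Q * (X'ᴴ * D)
      _ = Q * Qᴴ * (Xᴴ * D) - Q * (X'ᴴ * D) := by rw [mul_eq_one_comm.1 hQ, Matrix.one_mul]
      _ = -(Q * (X' - X * Q)ᴴ * D) := by
        simp only [conjTranspose_sub, conjTranspose_mul, Matrix.mul_sub, Matrix.sub_mul,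
          Matrix.mul_assoc, neg_sub]
  rw [rotated, norm_neg]
  refine (frobenius_norm_mul_le_mul_l2OpNorm _ D).trans_eq ?_
  rw [frobenius_norm_isometry_mul hQ, frobenius_norm_conjTranspose]

theorem rank_deficient_frob_bound_general {X X' D : Matrix ν κ 𝕜} {V₁ V₁' : Matrix κ ρ 𝕜}
    {V₂ V₂' : Matrix κ τ 𝕜} {σ σ' : ρ → ℝ} {a c : ℝ} (hX : Xᴴ * X = 1) (hX' : X'ᴴ * X' = 1)
    (hV : IsUnitarySplit V₁ V₂) (hV' : IsUnitarySplit V₁' V₂')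
    (hXD : Xᴴ * D = thinSVD V₁ σ V₁) (hXD' : X'ᴴ * D = thinSVD V₁' σ' V₁')
    (ha : 0 < a) (hc : 0 < c) (hσ : ∀ i, a ≤ σ i) (hσ' : ∀ i, c ≤ σ' i) :
    ∃ W : Matrix τ τ 𝕜, Wᴴ * W = 1 ∧
      ‖X' - (X * V₁ * V₁ᴴ + X * V₂ * W * V₂ᴴ)‖ ≤
        (√2 + 2 * √2 * l2OpNorm D / (a + c) + 4 * l2OpNorm D / max a c) *
          √(Fintype.card κ - ‖Xᴴ * X'‖ ^ 2) := by
  obtain ⟨Q, hQ, procrustes⟩ := exists_unitary_norm_sub_mul_le_sqrt hX hX'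
  have perturbation : ‖thinSVD V₁ σ V₁ - thinSVD (Q * V₁') σ' V₁'‖ ≤
      √2 * √(Fintype.card κ - ‖Xᴴ * X'‖ ^ 2) * l2OpNorm D := by
    rw [← mul_thinSVD, ← hXD, ← hXD']
    exact (norm_conjTranspose_mul_sub_mul_le hQ X X' D).trans
      (mul_le_mul_of_nonneg_right procrustes (l2OpNorm_nonneg D))
  obtain ⟨W, hW, polar⟩ :=
    exists_unitary_norm_polar_sub_le ha hc hσ hσ' hV (hV'.left_mul hQ) hV hV'
  have polar_factor : Q * V₁' * V₁'ᴴ + Q * V₂' * V₂'ᴴ = Q := by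
    rw [Matrix.mul_assoc, Matrix.mul_assoc, ← Matrix.mul_add, hV'.resolution, Matrix.mul_one]
  rw [polar_factor] at polar
  have decomposition : X' - (X * V₁ * V₁ᴴ + X * V₂ * W * V₂ᴴ) =
      (X' - X * Q) + X * (Q - (V₁ * V₁ᴴ + V₂ * W * V₂ᴴ)) := by
    simp only [Matrix.mul_sub, Matrix.mul_add, Matrix.mul_assoc]
    abel
  refine ⟨W, hW, ?_⟩
  set d := √(Fintype.card κ - ‖Xᴴ * X'‖ ^ 2)
  calc ‖X' - (X * V₁ * V₁ᴴ + X * V₂ * W * V₂ᴴ)‖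
    _ ≤ ‖X' - X * Q‖ + ‖Q - (V₁ * V₁ᴴ + V₂ * W * V₂ᴴ)‖ := by
      rw [decomposition, ← frobenius_norm_isometry_mul hX (Q - _)]
      exact norm_add_le _ _
    _ ≤ √2 * d + (2 / (a + c) + 2 * √2 / max a c) * (√2 * d * l2OpNorm D) := by
      refine add_le_add procrustes (polar.trans ?_)
      gcongr
    _ = (√2 + 2 * √2 * l2OpNorm D / (a + c) +
          2 * (√2 * √2) * l2OpNorm D / max a c) * d := by ring
    _ = (√2 + 2 * √2 * l2OpNorm D / (a + c) + 4 * l2OpNorm D / max a c) * d := by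
      rw [Real.mul_self_sqrt zero_le_two]
      norm_num

end RankDeficient

theorem frobNorm_eq_norm {m n : ℕ} (A : Matrix (Fin m) (Fin n) ℝ) : frobNorm A = ‖A‖ := by
  rw [frobNorm, ← conjTranspose_eq_transpose_of_trivial, ← Real.sqrt_sq (norm_nonneg A),
    frobenius_norm_sq_eq_re_trace, RCLike.re_to_real]

theorem specNorm_eq_l2OpNorm {m n : ℕ} (A : Matrix (Fin m) (Fin n) ℝ) :
    specNorm A = l2OpNorm A :=
  rfl

theorem mul_diagonal_mul_transpose_eq_headCols_add_tailCols {k r : ℕ} (h : r ≤ k)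
    (V : Matrix (Fin k) (Fin k) ℝ) (s : Fin k → ℝ) :
    V * diagonal s * Vᵀ =
      headCols r h V * diagonal (fun i : Fin r => s (i.castLE h)) * (headCols r h V)ᵀ +
        tailCols r h V *
          diagonal (fun j : Fin (k - r) => s ((Fin.natAdd r j).cast (Nat.add_sub_cancel' h))) *
            (tailCols r h V)ᵀ := by
  ext x y
  simp only [Matrix.add_apply, mul_apply (M := _ * _), mul_diagonal, transpose_apply]
  rw [← Equiv.sum_comp (finCongr (Nat.add_sub_cancel' h)), Fin.sum_univ_add]
  rfl

theorem isUnitarySplit_headCols_tailCols {k r : ℕ} (h : r ≤ k) {V : Matrix (Fin k) (Fin k) ℝ}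
    (hV : Vᵀ * V = 1) : IsUnitarySplit (headCols r h V) (tailCols r h V) where
  isometry_left := by
    rw [headCols, conjTranspose_eq_transpose_of_trivial, transpose_submatrix,
      ← submatrix_mul _ _ _ _ _ Function.bijective_id, hV,
      submatrix_one _ (Fin.castLE_injective h)]
  isometry_right := by
    rw [tailCols, conjTranspose_eq_transpose_of_trivial, transpose_submatrix,
      ← submatrix_mul _ _ _ _ _ Function.bijective_id, hV, submatrix_one]
    exact (Fin.cast_injective _).comp (Fin.natAdd_injective _ r)
  resolution := by
    simpa [mul_eq_one_comm.1 hV] using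
      (mul_diagonal_mul_transpose_eq_headCols_add_tailCols h V fun _ => 1).symm

theorem mul_diagonal_mul_transpose_eq_thinSVD_headCols {k r : ℕ} (h : r ≤ k)
    (V : Matrix (Fin k) (Fin k) ℝ) {s : Fin k → ℝ} (hs : ∀ i : Fin k, r ≤ (i : ℕ) → s i = 0) :
    V * diagonal s * Vᵀ =
      thinSVD (headCols r h V) (fun i => s (i.castLE h)) (headCols r h V) := by
  have tail_zero (j : Fin (k - r)) : s ((Fin.natAdd r j).cast (Nat.add_sub_cancel' h)) = 0 :=
    hs _ (Nat.le_add_right r j)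
  rw [mul_diagonal_mul_transpose_eq_headCols_add_tailCols h]
  simp [tail_zero, thinSVD, realDiagonal]

end FrobeniusNorm

/-- rank-deficient case, Frobenius norm. With XᵀD = VΣVᵀ, X̃ᵀD = ṼΣ̃Ṽᵀ
spectral decompositions of rank r < k, there exists an orthogonal W ∈ 𝕆^{(k−r)×(k−r)}
such that ‖X̃ − (XV₁V₁ᵀ + XV₂WV₂ᵀ)‖_F ≤
(√2 + 2√2‖D‖₂/(σ_r + σ̃_r) + 4‖D‖₂/max{σ_r, σ̃_r})·√(k − ‖XᵀX̃‖_F²). -/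
theorem rank_deficient_frob_bound {n k r : ℕ} (hr : 1 ≤ r) (hrk : r < k) (hkn : k ≤ n)
    (D X Xt : Matrix (Fin n) (Fin k) ℝ)
    (hX : Xᵀ * X = 1) (hXt : Xtᵀ * Xt = 1)
    (hpsd : (Xᵀ * D).PosSemidef) (hpsdt : (Xtᵀ * D).PosSemidef)
    (hrank : (Xᵀ * D).rank = r) (hrankt : (Xtᵀ * D).rank = r)
    (V Vt : Matrix (Fin k) (Fin k) ℝ) (hV : Vᵀ * V = 1) (hVt : Vtᵀ * Vt = 1)
    (s st : Fin k → ℝ)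
    (hord : ∀ i j : Fin k, i ≤ j → s j ≤ s i)
    (hordt : ∀ i j : Fin k, i ≤ j → st j ≤ st i)
    (hpos : ∀ i : Fin k, (i : ℕ) < r → 0 < s i)
    (hpost : ∀ i : Fin k, (i : ℕ) < r → 0 < st i)
    (hzero : ∀ i : Fin k, r ≤ (i : ℕ) → s i = 0)
    (hzerot : ∀ i : Fin k, r ≤ (i : ℕ) → st i = 0)
    (hdec : Xᵀ * D = V * Matrix.diagonal s * Vᵀ)
    (hdect : Xtᵀ * D = Vt * Matrix.diagonal st * Vtᵀ) :
    ∃ W : Matrix (Fin (k - r)) (Fin (k - r)) ℝ, Wᵀ * W = 1 ∧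
      frobNorm (Xt - (X * headCols r hrk.le V * (headCols r hrk.le V)ᵀ +
            X * tailCols r hrk.le V * W * (tailCols r hrk.le V)ᵀ))
        ≤ (Real.sqrt 2 +
            2 * Real.sqrt 2 * specNorm D /
              (s ⟨r - 1, by omega⟩ + st ⟨r - 1, by omega⟩) +
            4 * specNorm D / max (s ⟨r - 1, by omega⟩) (st ⟨r - 1, by omega⟩)) *
          Real.sqrt ((k : ℝ) - frobNorm (Xᵀ * Xt) ^ 2) := by
  rw [mul_diagonal_mul_transpose_eq_thinSVD_headCols hrk.le _ hzero] at hdec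
  rw [mul_diagonal_mul_transpose_eq_thinSVD_headCols hrk.le _ hzerot] at hdect
  have last_lt : r - 1 < r := by omega
  have le_last (i : Fin r) : i.castLE hrk.le ≤ ⟨r - 1, last_lt.trans hrk⟩ :=
    Fin.mk_le_mk.2 (Nat.le_sub_one_of_lt i.2)
  have bound := rank_deficient_frob_bound_general hX hXt
    (isUnitarySplit_headCols_tailCols hrk.le hV) (isUnitarySplit_headCols_tailCols hrk.le hVt)
    hdec hdect (hpos _ last_lt) (hpost _ last_lt)
    (fun i => hord _ _ (le_last i)) (fun i => hordt _ _ (le_last i))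
  simpa only [frobNorm_eq_norm, specNorm_eq_l2OpNorm, Fintype.card_fin,
    conjTranspose_eq_transpose_of_trivial] using bound
end

section
/- Let n ≥ k > r ≥ 1, D ∈ ℝ^{n×k}, and X, X̃ ∈ 𝕆^{n×k} be such that XᵀD ⪰ 0, X̃ᵀD ⪰ 0, and rank(XᵀD) = rank(X̃ᵀD) = r. Let XᵀD = VΣVᵀ and X̃ᵀD = ṼΣ̃Ṽᵀ be spectral decompositions with V, Ṽ ∈ 𝕆^{k×k} orthogonal, Σ = diag(σ_1, …, σ_r, 0, …, 0), Σ̃ = diag(σ̃_1, …, σ̃_r, 0, …, 0), σ_1 ≥ … ≥ σ_r > 0, σ̃_1 ≥ … ≥ σ̃_r > 0; write V₁ = V_{(:,1:r)}, V₂ = V_{(:,r+1:k)}. Let X_⊥ ∈ ℝ^{n×(n−k)} satisfy X_⊥ᵀX_⊥ = I_{n−k} and XᵀX_⊥ = 0. Then there exists W ∈ 𝕆^{(k−r)×(k−r)} such that ‖X̃ − (XV₁V₁ᵀ + XV₂WV₂ᵀ)‖₂ ≤ ( √2 + √( 8‖D‖₂²/(σ_r + σ̃_r)² + 4‖D‖₂²/(max{σ_r,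 σ̃_r})² ) + 4‖D‖₂/max{σ_r, σ̃_r} ) · ‖X_⊥ᵀX̃‖₂, where ‖X_⊥ᵀX̃‖₂ = ‖sin Θ(R(X), R(X̃))‖₂. -/
open Matrix

/-! The proof compares `X̃` with `X Q`, where the orthogonal matrix `Q` is a polar factor of `XᵀX̃`.
With `e = ‖X_⊥ᵀX̃‖`, the error `ε = ‖X̃ - X Q‖` satisfies `ε² ≤ e² + e⁴`, and `H = XᵀD`, `K = X̃ᵀD`
satisfy `‖H Q - K‖ ≤ ε ‖D‖`. As `H` and `K` are positive semidefinite, a Sylvester equation turns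
the latter bound into the statement that `Q` is close to the identity on the range of `H` and nearly
block diagonal with respect to `(V₁, V₂)`, so that `Q` is close to `V₁V₁ᵀ + V₂WV₂ᵀ` for a polar
factor `W` of `V₂ᵀQV₂`. The squared error of this last step is at most `24 ε² ‖D‖² / max{σ, σ̃}²`,
which is at most `36 e² ‖D‖² / max{σ, σ̃}²` when `e < 1/2`; when `e ≥ 1/2` the trivial estimate
`‖X̃ - X‖ ≤ 2` suffices. -/

open scoped Matrix.Norms.L2Operator

section OperatorNorm

variable {l m n : Type*} [Fintype l] [Fintype m] [Fintype n]

theorem l2_opNorm_transpose [DecidableEq m] [DecidableEq n] (A : Matrix m n ℝ) :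
    ‖Aᵀ‖ = ‖A‖ := by
  rw [← conjTranspose_eq_transpose_of_trivial, l2_opNorm_conjTranspose]

theorem l2_opNorm_transpose_mul_self [DecidableEq n] (A : Matrix m n ℝ) :
    ‖Aᵀ * A‖ = ‖A‖ ^ 2 := by
  rw [← conjTranspose_eq_transpose_of_trivial, l2_opNorm_conjTranspose_mul_self, sq]

theorem l2_opNorm_one_le [DecidableEq n] : ‖(1 : Matrix n n ℝ)‖ ≤ 1 := by
  rw [← diagonal_one, l2_opNorm_diagonal, pi_norm_le_iff_of_nonneg zero_le_one]
  simp

theorem l2_opNorm_le_one_of_transpose_mul_self [DecidableEq n] {A : Matrix m n ℝ}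
    (hA : Aᵀ * A = 1) : ‖A‖ ≤ 1 := by
  rw [← sq_le_one_iff₀ (norm_nonneg A), ← l2_opNorm_transpose_mul_self, hA]
  exact l2_opNorm_one_le

theorem l2_opNorm_mul_orthonormal_le [DecidableEq m] [DecidableEq n] (B : Matrix l m ℝ)
    {A : Matrix m n ℝ} (hA : Aᵀ * A = 1) : ‖B * A‖ ≤ ‖B‖ :=
  (l2_opNorm_mul B A).trans
    (mul_le_of_le_one_right (norm_nonneg B) (l2_opNorm_le_one_of_transpose_mul_self hA))

theorem l2_opNorm_orthonormal_transpose_mul_le [DecidableEq m] [DecidableEq n] {A : Matrix l m ℝ}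
    (hA : Aᵀ * A = 1) (B : Matrix l n ℝ) : ‖Aᵀ * B‖ ≤ ‖B‖ := by
  classical
  rw [← l2_opNorm_transpose, ← l2_opNorm_transpose B, transpose_mul, transpose_transpose]
  exact l2_opNorm_mul_orthonormal_le Bᵀ hA

theorem l2_opNorm_orthonormal_transpose_mul_orthonormal_le [DecidableEq m] [DecidableEq n]
    {A : Matrix l m ℝ} {B : Matrix l n ℝ} (hA : Aᵀ * A = 1) (hB : Bᵀ * B = 1) :
    ‖Aᵀ * B‖ ≤ 1 :=
  (l2_opNorm_orthonormal_transpose_mul_le hA B).trans (l2_opNorm_le_one_of_transpose_mul_self hB)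

theorem l2_opNorm_orthonormal_mul [DecidableEq m] [DecidableEq n] {A : Matrix l m ℝ}
    (hA : Aᵀ * A = 1) (B : Matrix m n ℝ) : ‖A * B‖ = ‖B‖ := by
  rw [← sq_eq_sq₀ (norm_nonneg _) (norm_nonneg _), ← l2_opNorm_transpose_mul_self,
    ← l2_opNorm_transpose_mul_self, transpose_mul, Matrix.mul_assoc, ← Matrix.mul_assoc Aᵀ, hA,
    Matrix.one_mul]

theorem l2_opNorm_mul_orthonormal_transpose [DecidableEq l] [DecidableEq m]
    (B : Matrix n m ℝ) {A : Matrix l m ℝ} (hA : Aᵀ * A = 1) : ‖B * Aᵀ‖ = ‖B‖ := by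
  classical
  rw [← l2_opNorm_transpose, transpose_mul, transpose_transpose, l2_opNorm_orthonormal_mul hA,
    l2_opNorm_transpose]

end OperatorNorm

section Sylvester

variable {m n : Type*} [Fintype m] [Fintype n]

open scoped MatrixOrder in
theorem exists_transpose_mulVec_mulVec_eq_norm_sq_smul [DecidableEq n] [Nonempty n]
    (Z : Matrix m n ℝ) :
    ∃ v : n → ℝ, v ≠ 0 ∧ Zᵀ *ᵥ (Z *ᵥ v) = ‖Z‖ ^ 2 • v := by
  have hpsd : (Zᵀ * Z).PosSemidef := by simpa using posSemidef_conjTranspose_mul_self Z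
  obtain ⟨μ, hμ, hnorm⟩ := (IsometricContinuousFunctionalCalculus.isGreatest_norm_spectrum
    (𝕜 := ℝ) (Zᵀ * Z) hpsd.isHermitian.isSelfAdjoint).1
  change ‖μ‖ = _ at hnorm
  rw [Real.norm_of_nonneg (spectrum_nonneg_of_nonneg hpsd.nonneg hμ),
    l2_opNorm_transpose_mul_self] at hnorm
  rw [← spectrum_toLin', ← Module.End.hasEigenvalue_iff_mem_spectrum] at hμ
  obtain ⟨v, hv⟩ := hμ.exists_hasEigenvector
  refine ⟨v, hv.2, ?_⟩
  rw [mulVec_mulVec, ← hnorm, ← toLin'_apply]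
  exact hv.apply_eq_smul

theorem dotProduct_mulVec_le [DecidableEq n] (A : Matrix m n ℝ) (u : m → ℝ) (v : n → ℝ) :
    u ⬝ᵥ (A *ᵥ v) ≤ ‖A‖ * (‖WithLp.toLp 2 u‖ * ‖WithLp.toLp 2 v‖) := by
  calc u ⬝ᵥ (A *ᵥ v) = inner ℝ (WithLp.toLp 2 u) (WithLp.toLp 2 (A *ᵥ v)) := by
        rw [EuclideanSpace.inner_toLp_toLp, star_trivial, dotProduct_comm]
    _ ≤ ‖WithLp.toLp 2 u‖ * ‖WithLp.toLp 2 (A *ᵥ v)‖ := real_inner_le_norm _ _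
    _ ≤ ‖WithLp.toLp 2 u‖ * (‖A‖ * ‖WithLp.toLp 2 v‖) := by
        gcongr
        exact l2_opNorm_mulVec A (WithLp.toLp 2 v)
    _ = _ := by ring

theorem norm_toLp_sq_eq_dotProduct (v : n → ℝ) : ‖WithLp.toLp 2 v‖ ^ 2 = v ⬝ᵥ v := by
  rw [← real_inner_self_eq_norm_sq, EuclideanSpace.inner_toLp_toLp, star_trivial]

/- A right singular vector `v` of `Z` for the singular value `‖Z‖` turns the quadratic form of the
Sylvester operator at `(Z v, v)` into the sum of those of `A` at `Z v` and of `‖Z‖ ^ 2 • K` at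
`v`. -/
theorem mul_norm_le_norm_mul_add_mul [DecidableEq m] [DecidableEq n] {σ : ℝ}
    {A : Matrix m m ℝ} {K : Matrix n n ℝ}
    (hA : (A - σ • 1).PosSemidef) (hK : K.PosSemidef) (Z : Matrix m n ℝ) :
    σ * ‖Z‖ ≤ ‖A * Z + Z * K‖ := by
  rcases isEmpty_or_nonempty n with hn | hn
  · simp [Subsingleton.elim Z 0]
  rcases (norm_nonneg Z).eq_or_lt with hZ | hZ
  · simp [← hZ]
  obtain ⟨v, hv, hsing⟩ := exists_transpose_mulVec_mulVec_eq_norm_sq_smul Z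
  have hvv : 0 < v ⬝ᵥ v := by
    rw [← norm_toLp_sq_eq_dotProduct]
    have : WithLp.toLp 2 v ≠ 0 := by simpa using hv
    positivity
  have hpair (u : n → ℝ) : (Z *ᵥ v) ⬝ᵥ (Z *ᵥ u) = ‖Z‖ ^ 2 * (v ⬝ᵥ u) := by
    rw [dotProduct_mulVec, ← mulVec_transpose, hsing, smul_dotProduct, smul_eq_mul]
  have hnorm : ‖WithLp.toLp 2 (Z *ᵥ v)‖ = ‖Z‖ * ‖WithLp.toLp 2 v‖ := by
    rw [← sq_eq_sq₀ (by positivity) (by positivity), mul_pow, norm_toLp_sq_eq_dotProduct, hpair,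
      norm_toLp_sq_eq_dotProduct]
  have hform : (Z *ᵥ v) ⬝ᵥ ((A * Z + Z * K) *ᵥ v) =
      (Z *ᵥ v) ⬝ᵥ (A *ᵥ (Z *ᵥ v)) + ‖Z‖ ^ 2 * (v ⬝ᵥ (K *ᵥ v)) := by
    rw [add_mulVec, dotProduct_add, ← mulVec_mulVec, ← mulVec_mulVec, hpair]
  have hlow : σ * (‖Z‖ ^ 2 * (v ⬝ᵥ v)) ≤ (Z *ᵥ v) ⬝ᵥ (A *ᵥ (Z *ᵥ v)) := by
    have h := hA.dotProduct_mulVec_nonneg (Z *ᵥ v)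
    rwa [star_trivial, sub_mulVec, dotProduct_sub, smul_mulVec, one_mulVec, dotProduct_smul,
      hpair, smul_eq_mul, sub_nonneg] at h
  have hK' : 0 ≤ v ⬝ᵥ (K *ᵥ v) := by simpa using hK.dotProduct_mulVec_nonneg v
  have hup := dotProduct_mulVec_le (A * Z + Z * K) (Z *ᵥ v) v
  rw [hform, hnorm, mul_assoc, ← sq, norm_toLp_sq_eq_dotProduct] at hup
  refine le_of_mul_le_mul_right ?_ (mul_pos hZ hvv)
  linarith [mul_nonneg (sq_nonneg ‖Z‖) hK']

end Sylvester

section Polar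

theorem exists_linearIsometry_comp_eq {𝕜 E F : Type*} [RCLike 𝕜] [AddCommGroup E] [Module 𝕜 E]
    [NormedAddCommGroup F] [InnerProductSpace 𝕜 F] [FiniteDimensional 𝕜 F]
    {f g : E →ₗ[𝕜] F} (hfg : ∀ x, ‖f x‖ = ‖g x‖) :
    ∃ U : F →ₗᵢ[𝕜] F, ∀ x, f x = U (g x) := by
  obtain ⟨s, hs⟩ := g.rangeRestrict.exists_rightInverse_of_surjective g.range_rangeRestrict
  have hgs (y : g.range) : g (s y) = y := congrArg Subtype.val (LinearMap.congr_fun hs y)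
  let L : g.range →ₗᵢ[𝕜] F :=
    { f ∘ₗ s with norm_map' := fun y => by simp [hfg, hgs] }
  refine ⟨L.extend, fun x => ?_⟩
  have hker : ‖f (x - s (g.rangeRestrict x))‖ = 0 := by rw [hfg, map_sub, hgs]; simp
  rw [norm_eq_zero, map_sub, sub_eq_zero] at hker
  exact hker.trans (L.extend_apply (g.rangeRestrict x)).symm

theorem exists_orthogonal_mul_eq_of_gram_eq {m n : Type*} [Fintype m] [DecidableEq m] [Finite n]
    {A B : Matrix m n ℝ} (h : Aᵀ * A = Bᵀ * B) :
    ∃ W : Matrix m m ℝ, Wᵀ * W = 1 ∧ A = W * B := by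
  have := Fintype.ofFinite n
  classical
  have hnorm (x : EuclideanSpace ℝ n) : ‖toLpLin 2 2 A x‖ = ‖toLpLin 2 2 B x‖ := by
    rw [← sq_eq_sq₀ (norm_nonneg _) (norm_nonneg _)]
    simp only [toLpLin_apply, norm_toLp_sq_eq_dotProduct, dotProduct_mulVec,
      ← mulVec_transpose, mulVec_mulVec, h]
  obtain ⟨U, hU⟩ := exists_linearIsometry_comp_eq hnorm
  obtain ⟨W, hW⟩ := (toLpLin 2 2).surjective U.toLinearMap
  refine ⟨W, (toLpLin 2 2).injective ?_, (toLpLin 2 2).injective ?_⟩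
  · rw [toLpLin_mul_same, ← conjTranspose_eq_transpose_of_trivial,
      toEuclideanLin_conjTranspose_eq_adjoint, hW, U.adjoint_comp_self', toLpLin_one]
  · exact LinearMap.ext fun x => by rw [hU, toLpLin_mul_same, hW]; rfl

open scoped MatrixOrder in
theorem exists_polar_decomposition {n : Type*} [Fintype n] [DecidableEq n] (A : Matrix n n ℝ) :
    ∃ W S : Matrix n n ℝ, Wᵀ * W = 1 ∧ S.PosSemidef ∧ S * S = Aᵀ * A ∧ A = W * S := by
  have hgram : (Aᵀ * A).PosSemidef := by simpa using posSemidef_conjTranspose_mul_self A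
  have hS : (CFC.sqrt (Aᵀ * A)).PosSemidef := nonneg_iff_posSemidef.mp (CFC.sqrt_nonneg _)
  have hSS := CFC.sqrt_mul_sqrt_self (Aᵀ * A) hgram.nonneg
  have hST : (CFC.sqrt (Aᵀ * A))ᵀ = CFC.sqrt (Aᵀ * A) := by simpa using hS.isHermitian.eq
  obtain ⟨W, hW, hA⟩ := exists_orthogonal_mul_eq_of_gram_eq (A := A) (B := CFC.sqrt (Aᵀ * A))
    (by rw [hST, hSS])
  exact ⟨W, _, hW, hS, hSS, hA⟩

theorem exists_orthogonal_norm_sub_le {n : Type*} [Fintype n] [DecidableEq n]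
    (A : Matrix n n ℝ) : ∃ W : Matrix n n ℝ, Wᵀ * W = 1 ∧ ‖A - W‖ ≤ ‖1 - Aᵀ * A‖ := by
  obtain ⟨W, S, hW, hS, hSS, hA⟩ := exists_polar_decomposition A
  have hone : ((1 : Matrix n n ℝ) - (1 : ℝ) • 1).PosSemidef := by simpa using PosSemidef.zero
  have hsylv := mul_norm_le_norm_mul_add_mul hone hS (1 - S)
  refine ⟨W, hW, ?_⟩
  calc ‖A - W‖ = ‖W * (1 - S)‖ := by rw [norm_sub_rev, hA, Matrix.mul_sub, Matrix.mul_one]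
    _ = ‖1 - S‖ := l2_opNorm_orthonormal_mul hW _
    _ ≤ ‖1 - Aᵀ * A‖ := by
      rwa [one_mul, show 1 * (1 - S) + (1 - S) * S = 1 - S * S by noncomm_ring, hSS] at hsylv

theorem norm_one_sub_mul_transpose {n : Type*} [Fintype n] [DecidableEq n] (A : Matrix n n ℝ) :
    ‖1 - A * Aᵀ‖ = ‖1 - Aᵀ * A‖ := by
  obtain ⟨W, S, hW, hS, hSS, hA⟩ := exists_polar_decomposition A
  have hST : Sᵀ = S := by simpa using hS.isHermitian.eq
  have hconj : 1 - A * Aᵀ = W * (1 - Aᵀ * A) * Wᵀ := by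
    rw [← hSS, Matrix.mul_sub, Matrix.sub_mul, Matrix.mul_one, mul_eq_one_comm.mp hW, hA,
      transpose_mul, hST]
    simp only [Matrix.mul_assoc]
  rw [hconj, l2_opNorm_mul_orthonormal_transpose _ hW, l2_opNorm_orthonormal_mul hW]

end Polar

/-- The columns of `P` and of `T` together form an orthonormal basis of `ℝ^κ`. Keeping the two
blocks over separate index types lets it express both an orthogonal completion `(X, X_⊥)` and the
partition `(V₁, V₂)` of an orthogonal matrix. -/
structure IsOrthogonalSplit {κ ρ θ : Type*} [Fintype κ] [Fintype ρ] [Fintype θ] [DecidableEq κ]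
    [DecidableEq ρ] [DecidableEq θ] (P : Matrix κ ρ ℝ) (T : Matrix κ θ ℝ) : Prop where
  transpose_mul_left : Pᵀ * P = 1
  transpose_mul_right : Tᵀ * T = 1
  mul_transpose_add_mul_transpose : P * Pᵀ + T * Tᵀ = 1

namespace IsOrthogonalSplit

variable {κ ρ θ ι : Type*} [Fintype κ] [Fintype ρ] [Fintype θ] [DecidableEq κ]
  [DecidableEq ρ] [DecidableEq θ] {P : Matrix κ ρ ℝ} {T : Matrix κ θ ℝ}

theorem of_equiv (e : ρ ⊕ θ ≃ κ) (hP : Pᵀ * P = 1) (hT : Tᵀ * T = 1) (hPT : Pᵀ * T = 0) :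
    IsOrthogonalSplit P T := by
  have hTP : Tᵀ * P = 0 := by simpa using congrArg transpose hPT
  have hleft : fromRows Pᵀ Tᵀ * fromCols P T = 1 := by
    rw [fromRows_mul_fromCols, hP, hT, hPT, hTP, fromBlocks_one]
  have hright := (mul_eq_one_comm_of_equiv e).mp hleft
  exact ⟨hP, hT, by rwa [fromCols_mul_fromRows] at hright⟩

theorem submatrix (e : ρ ⊕ θ ≃ κ) {V : Matrix κ κ ℝ} (hV : Vᵀ * V = 1) :
    IsOrthogonalSplit (V.submatrix id (e ∘ Sum.inl)) (V.submatrix id (e ∘ Sum.inr)) := by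
  refine of_equiv e ?_ ?_ ?_ <;>
    rw [transpose_submatrix, ← submatrix_mul _ _ _ id _ Function.bijective_id, hV]
  · exact submatrix_one _ (e.injective.comp Sum.inl_injective)
  · exact submatrix_one _ (e.injective.comp Sum.inr_injective)
  · ext i j
    simp [one_apply]

theorem symm (h : IsOrthogonalSplit P T) : IsOrthogonalSplit T P :=
  ⟨h.transpose_mul_right, h.transpose_mul_left,
    by rw [add_comm, h.mul_transpose_add_mul_transpose]⟩

theorem transpose_mul_eq_zero (h : IsOrthogonalSplit P T) : Pᵀ * T = 0 := by
  have hPTT : Pᵀ * T * Tᵀ = 0 := by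
    have hsum : Pᵀ * (P * Pᵀ + T * Tᵀ) = Pᵀ := by
      rw [h.mul_transpose_add_mul_transpose, Matrix.mul_one]
    rwa [Matrix.mul_add, ← Matrix.mul_assoc, h.transpose_mul_left, Matrix.one_mul, add_eq_left,
      ← Matrix.mul_assoc] at hsum
  rw [← Matrix.mul_one (Pᵀ * T), ← h.transpose_mul_right, ← Matrix.mul_assoc, hPTT,
    Matrix.zero_mul]

theorem orthogonal_mul (h : IsOrthogonalSplit P T) {Q : Matrix κ κ ℝ} (hQ : Qᵀ * Q = 1) :
    IsOrthogonalSplit (Q * P) (Q * T) where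
  transpose_mul_left := by
    rw [transpose_mul, Matrix.mul_assoc, ← Matrix.mul_assoc Qᵀ, hQ, Matrix.one_mul,
      h.transpose_mul_left]
  transpose_mul_right := by
    rw [transpose_mul, Matrix.mul_assoc, ← Matrix.mul_assoc Qᵀ, hQ, Matrix.one_mul,
      h.transpose_mul_right]
  mul_transpose_add_mul_transpose := by
    simp only [transpose_mul, Matrix.mul_assoc, ← Matrix.mul_add]
    rw [← Matrix.mul_assoc P, ← Matrix.mul_assoc T, ← Matrix.add_mul,
      h.mul_transpose_add_mul_transpose, Matrix.one_mul, mul_eq_one_comm.mp hQ]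

theorem mul_transpose_mul_add (h : IsOrthogonalSplit P T) (M : Matrix κ ι ℝ) :
    P * (Pᵀ * M) + T * (Tᵀ * M) = M := by
  rw [← Matrix.mul_assoc, ← Matrix.mul_assoc, ← Matrix.add_mul,
    h.mul_transpose_add_mul_transpose, Matrix.one_mul]

theorem gram_add_gram (h : IsOrthogonalSplit P T) (M : Matrix κ ι ℝ) :
    (Pᵀ * M)ᵀ * (Pᵀ * M) + (Tᵀ * M)ᵀ * (Tᵀ * M) = Mᵀ * M := by
  simp only [transpose_mul, transpose_transpose, Matrix.mul_assoc]
  rw [← Matrix.mul_add, h.mul_transpose_mul_add]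

variable [Fintype ι]

theorem norm_mul_add_mul_sq_le [DecidableEq ι] (h : IsOrthogonalSplit P T)
    (A : Matrix ρ ι ℝ) (B : Matrix θ ι ℝ) : ‖P * A + T * B‖ ^ 2 ≤ ‖A‖ ^ 2 + ‖B‖ ^ 2 := by
  have hA : Pᵀ * (P * A + T * B) = A := by
    rw [Matrix.mul_add, ← Matrix.mul_assoc, ← Matrix.mul_assoc, h.transpose_mul_left,
      h.transpose_mul_eq_zero, Matrix.one_mul, Matrix.zero_mul, add_zero]
  have hB : Tᵀ * (P * A + T * B) = B := by
    rw [Matrix.mul_add, ← Matrix.mul_assoc, ← Matrix.mul_assoc, h.transpose_mul_right,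
      h.symm.transpose_mul_eq_zero, Matrix.one_mul, Matrix.zero_mul, zero_add]
  rw [← l2_opNorm_transpose_mul_self, ← h.gram_add_gram, hA, hB, ← l2_opNorm_transpose_mul_self,
    ← l2_opNorm_transpose_mul_self]
  exact norm_add_le _ _

theorem norm_mul_le_add {ι' : Type*} [Fintype ι'] [DecidableEq ι'] (h : IsOrthogonalSplit P T)
    (A : Matrix ι κ ℝ) (B : Matrix κ ι' ℝ) :
    ‖A * B‖ ≤ ‖A * P‖ * ‖Pᵀ * B‖ + ‖A * T‖ * ‖Tᵀ * B‖ :=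
  calc ‖A * B‖ = ‖A * P * (Pᵀ * B) + A * T * (Tᵀ * B)‖ := by
        rw [Matrix.mul_assoc A, Matrix.mul_assoc A, ← Matrix.mul_add, h.mul_transpose_mul_add]
    _ ≤ _ := (norm_add_le _ _).trans (add_le_add (l2_opNorm_mul _ _) (l2_opNorm_mul _ _))

theorem norm_mul_transpose_add_mul_transpose_sq_le (h : IsOrthogonalSplit P T)
    (A : Matrix ι ρ ℝ) (B : Matrix ι θ ℝ) : ‖A * Pᵀ + B * Tᵀ‖ ^ 2 ≤ ‖A‖ ^ 2 + ‖B‖ ^ 2 := by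
  classical
  have := h.norm_mul_add_mul_sq_le Aᵀ Bᵀ
  rwa [← l2_opNorm_transpose A, ← l2_opNorm_transpose B, ← l2_opNorm_transpose, transpose_add,
    transpose_mul, transpose_mul, transpose_transpose, transpose_transpose]

theorem norm_one_sub_gram [DecidableEq ι] (h : IsOrthogonalSplit P T) {Y : Matrix κ ι ℝ}
    (hY : Yᵀ * Y = 1) : ‖1 - (Pᵀ * Y)ᵀ * (Pᵀ * Y)‖ = ‖Tᵀ * Y‖ ^ 2 := by
  rw [← hY, ← h.gram_add_gram Y, add_sub_cancel_left, l2_opNorm_transpose_mul_self]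

theorem norm_transpose_mul_comm {θ' : Type*} [Fintype θ'] [DecidableEq θ'] {P' : Matrix κ ρ ℝ}
    {T' : Matrix κ θ' ℝ} (h : IsOrthogonalSplit P T) (h' : IsOrthogonalSplit P' T') :
    ‖Tᵀ * P'‖ = ‖T'ᵀ * P‖ := by
  have hC : (P'ᵀ * P)ᵀ = Pᵀ * P' := by rw [transpose_mul, transpose_transpose]
  rw [← sq_eq_sq₀ (norm_nonneg _) (norm_nonneg _), ← h.norm_one_sub_gram h'.transpose_mul_left,
    ← h'.norm_one_sub_gram h.transpose_mul_left, ← hC, transpose_transpose,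
    norm_one_sub_mul_transpose]

theorem exists_orthogonal_norm_sub_mul_sq_le (h : IsOrthogonalSplit P T) {Y : Matrix κ ρ ℝ}
    (hY : Yᵀ * Y = 1) :
    ∃ W : Matrix ρ ρ ℝ, Wᵀ * W = 1 ∧ ‖Y - P * W‖ ^ 2 ≤ ‖Tᵀ * Y‖ ^ 2 + ‖Tᵀ * Y‖ ^ 4 := by
  obtain ⟨W, hW, hle⟩ := exists_orthogonal_norm_sub_le (Pᵀ * Y)
  rw [h.norm_one_sub_gram hY] at hle
  refine ⟨W, hW, ?_⟩
  calc ‖Y - P * W‖ ^ 2 = ‖P * (Pᵀ * Y - W) + T * (Tᵀ * Y)‖ ^ 2 := by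
        rw [Matrix.mul_sub, sub_add_eq_add_sub, h.mul_transpose_mul_add]
    _ ≤ ‖Pᵀ * Y - W‖ ^ 2 + ‖Tᵀ * Y‖ ^ 2 := h.norm_mul_add_mul_sq_le _ _
    _ ≤ (‖Tᵀ * Y‖ ^ 2) ^ 2 + ‖Tᵀ * Y‖ ^ 2 := by gcongr
    _ = ‖Tᵀ * Y‖ ^ 2 + ‖Tᵀ * Y‖ ^ 4 := by ring

theorem exists_orthogonal_norm_sub_block_sq_le (h : IsOrthogonalSplit P T)
    {Q : Matrix κ κ ℝ} (hQ : Qᵀ * Q = 1) :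
    ∃ W : Matrix θ θ ℝ, Wᵀ * W = 1 ∧
      ‖Q - (P * Pᵀ + T * W * Tᵀ)‖ ^ 2 ≤ ‖(Q - 1) * P‖ ^ 2 + 2 * ‖Pᵀ * Q * T‖ ^ 2 := by
  obtain ⟨W, hW, hle⟩ := h.symm.exists_orthogonal_norm_sub_mul_sq_le
    (h.orthogonal_mul hQ).transpose_mul_right
  rw [← Matrix.mul_assoc] at hle
  have hc : ‖Pᵀ * Q * T‖ ≤ 1 := by
    rw [Matrix.mul_assoc]
    exact l2_opNorm_orthonormal_transpose_mul_orthonormal_le h.transpose_mul_left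
      (h.orthogonal_mul hQ).transpose_mul_right
  have hc4 : ‖Pᵀ * Q * T‖ ^ 4 ≤ ‖Pᵀ * Q * T‖ ^ 2 :=
    pow_le_pow_of_le_one (norm_nonneg _) hc (by norm_num)
  have hdecomp : Q - (P * Pᵀ + T * W * Tᵀ) = (Q - 1) * P * Pᵀ + (Q * T - T * W) * Tᵀ := by
    have hQs : Q * P * Pᵀ + Q * T * Tᵀ = Q := by
      rw [Matrix.mul_assoc, Matrix.mul_assoc, ← Matrix.mul_add,
        h.mul_transpose_add_mul_transpose, Matrix.mul_one]
    simp only [Matrix.sub_mul, Matrix.one_mul]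
    rw [sub_add_sub_comm, hQs]
  have hpyth := h.norm_mul_transpose_add_mul_transpose_sq_le ((Q - 1) * P) (Q * T - T * W)
  refine ⟨W, hW, ?_⟩
  rw [hdecomp]
  linarith

end IsOrthogonalSplit

section Orthogonal

variable {κ ρ : Type*} [Fintype κ] [DecidableEq κ] [Fintype ρ] [DecidableEq ρ] {Q : Matrix κ κ ℝ}

theorem norm_orthogonal_sub_one_mul (hQ : Qᵀ * Q = 1) (P : Matrix κ ρ ℝ) :
    ‖(Q - 1) * P‖ = ‖Pᵀ * (Q - 1)‖ := by
  have hfactor : (Q - 1) * P = -(Q * ((Qᵀ - 1) * P)) := by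
    rw [← Matrix.mul_assoc, Matrix.mul_sub, mul_eq_one_comm.mp hQ, Matrix.mul_one,
      ← Matrix.neg_mul, neg_sub]
  rw [hfactor, norm_neg, l2_opNorm_orthonormal_mul hQ, ← l2_opNorm_transpose]
  simp only [transpose_mul, transpose_sub, transpose_transpose, transpose_one]

theorem norm_orthogonal_sub_one_le (hQ : Qᵀ * Q = 1) : ‖Q - 1‖ ≤ 2 :=
  calc ‖Q - 1‖ ≤ ‖Q‖ + ‖(1 : Matrix κ κ ℝ)‖ := norm_sub_le _ _
    _ ≤ 1 + 1 := add_le_add (l2_opNorm_le_one_of_transpose_mul_self hQ) l2_opNorm_one_le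
    _ = 2 := one_add_one_eq_two

variable {H K : Matrix κ κ ℝ}

theorem norm_sub_mul_orthogonal_transpose (hQ : Qᵀ * Q = 1) :
    ‖K * Qᵀ - H‖ = ‖H * Q - K‖ := by
  have hfactor : K * Qᵀ - H = -((H * Q - K) * Qᵀ) := by
    rw [Matrix.sub_mul, Matrix.mul_assoc, mul_eq_one_comm.mp hQ, Matrix.mul_one, neg_sub]
  rw [hfactor, norm_neg, l2_opNorm_mul_orthonormal_transpose _ hQ]

theorem norm_transpose_mul_sub (hH : Hᵀ = H) (hK : Kᵀ = K) :
    ‖Qᵀ * H - K‖ = ‖H * Q - K‖ := by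
  rw [← l2_opNorm_transpose, transpose_sub, transpose_mul, transpose_transpose, hH, hK]

theorem norm_orthogonal_mul_sub (hQ : Qᵀ * Q = 1) (hH : Hᵀ = H) (hK : Kᵀ = K) :
    ‖Q * K - H‖ = ‖H * Q - K‖ := by
  have h := norm_transpose_mul_sub (Q := Qᵀ) hK hH
  rwa [transpose_transpose, norm_sub_mul_orthogonal_transpose hQ] at h

end Orthogonal

/-- The symmetric positive semidefinite matrix `H` is block diagonal with respect to the orthogonal
split `(P, T)`, vanishing on the range of `T` and bounded below by `σ` on the range of `P`. For a
matrix of rank `r` with `V = (V₁, V₂)` as in a spectral decomposition, this holds with `P = V₁`,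
`T = V₂` and `σ` the smallest nonzero eigenvalue. -/
structure IsSpectralSplit {κ ρ θ : Type*} [Fintype κ] [Fintype ρ] [Fintype θ] [DecidableEq κ]
    [DecidableEq ρ] [DecidableEq θ] (H : Matrix κ κ ℝ) (P : Matrix κ ρ ℝ) (T : Matrix κ θ ℝ)
    (σ : ℝ) : Prop extends IsOrthogonalSplit P T where
  posSemidef : H.PosSemidef
  mul_right_eq_zero : H * T = 0
  posSemidef_compression_sub : (Pᵀ * H * P - σ • 1).PosSemidef

namespace IsSpectralSplit

variable {κ ρ θ θ' ι : Type*} [Fintype κ] [Fintype ρ] [Fintype θ] [Fintype θ']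
  [DecidableEq κ] [DecidableEq ρ] [DecidableEq θ] [DecidableEq θ']
  {H K Q : Matrix κ κ ℝ} {P P' : Matrix κ ρ ℝ} {T : Matrix κ θ ℝ} {T' : Matrix κ θ' ℝ} {σ τ : ℝ}

theorem transpose_eq (h : IsSpectralSplit H P T σ) : Hᵀ = H := by
  simpa using h.posSemidef.isHermitian.eq

theorem compression_mul (h : IsSpectralSplit H P T σ) (M : Matrix κ ι ℝ) :
    Pᵀ * H * P * (Pᵀ * M) = Pᵀ * (H * M) := by
  have hHP : H * (P * (Pᵀ * M)) = H * M := by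
    conv_rhs => rw [← h.mul_transpose_mul_add M, Matrix.mul_add, ← Matrix.mul_assoc H T,
      h.mul_right_eq_zero, Matrix.zero_mul, add_zero]
  rw [Matrix.mul_assoc, Matrix.mul_assoc, hHP]

variable [Fintype ι] [DecidableEq ι]

theorem mul_norm_transpose_mul_le (h : IsSpectralSplit H P T σ) (M : Matrix κ ι ℝ) :
    σ * ‖Pᵀ * M‖ ≤ ‖H * M‖ := by
  have hsylv := mul_norm_le_norm_mul_add_mul h.posSemidef_compression_sub
    (PosSemidef.zero (n := ι)) (Pᵀ * M)
  rw [Matrix.mul_zero, add_zero, h.compression_mul] at hsylv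
  exact hsylv.trans (l2_opNorm_orthonormal_transpose_mul_le h.transpose_mul_left _)

theorem le_norm [Nonempty ρ] (h : IsSpectralSplit H P T σ) : σ ≤ ‖H‖ := by
  have hone : ‖(1 : Matrix ρ ρ ℝ)‖ = 1 := CStarRing.norm_one
  have hP := h.mul_norm_transpose_mul_le P
  rw [h.transpose_mul_left, hone, mul_one] at hP
  exact hP.trans (l2_opNorm_mul_orthonormal_le H h.transpose_mul_left)

/- `Z = Pᵀ(Q - 1)` solves the Sylvester equation `(PᵀHP) Z + Z K = Pᵀ((HQ - K) + (QK - H))`. -/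
theorem mul_norm_transpose_mul_sub_one_le (h : IsSpectralSplit H P T σ)
    (hK : K.PosSemidef) (hQ : Qᵀ * Q = 1) : σ * ‖Pᵀ * (Q - 1)‖ ≤ 2 * ‖H * Q - K‖ := by
  have hKT : Kᵀ = K := by simpa using hK.isHermitian.eq
  have hsum : Pᵀ * H * P * (Pᵀ * (Q - 1)) + Pᵀ * (Q - 1) * K =
      Pᵀ * ((H * Q - K) + (Q * K - H)) := by
    rw [h.compression_mul, Matrix.mul_assoc, ← Matrix.mul_add]
    congr 1
    noncomm_ring
  calc σ * ‖Pᵀ * (Q - 1)‖ ≤ ‖Pᵀ * ((H * Q - K) + (Q * K - H))‖ :=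
        hsum ▸ mul_norm_le_norm_mul_add_mul h.posSemidef_compression_sub hK _
    _ ≤ ‖(H * Q - K) + (Q * K - H)‖ :=
      l2_opNorm_orthonormal_transpose_mul_le h.transpose_mul_left _
    _ ≤ ‖H * Q - K‖ + ‖Q * K - H‖ := norm_add_le _ _
    _ = 2 * ‖H * Q - K‖ := by
      rw [norm_orthogonal_mul_sub hQ h.transpose_eq hKT, two_mul]

theorem mul_norm_sub_one_mul_le_left (h : IsSpectralSplit H P T σ) (hK : K.PosSemidef)
    (hQ : Qᵀ * Q = 1) : σ * ‖(Q - 1) * P‖ ≤ 2 * ‖H * Q - K‖ := by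
  rw [norm_orthogonal_sub_one_mul hQ]
  exact h.mul_norm_transpose_mul_sub_one_le hK hQ

theorem mul_norm_transpose_mul_mul_le_left (h : IsSpectralSplit H P T σ) (hσ : 0 ≤ σ)
    (hK : K.PosSemidef) (hQ : Qᵀ * Q = 1) : σ * ‖Pᵀ * Q * T‖ ≤ 2 * ‖H * Q - K‖ := by
  have hT : Pᵀ * Q * T = Pᵀ * (Q - 1) * T := by
    rw [Matrix.mul_sub, Matrix.mul_one, Matrix.sub_mul, h.transpose_mul_eq_zero, sub_zero]
  calc σ * ‖Pᵀ * Q * T‖ ≤ σ * ‖Pᵀ * (Q - 1)‖ := by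
        rw [hT]
        gcongr
        exact l2_opNorm_mul_orthonormal_le _ h.transpose_mul_right
    _ ≤ 2 * ‖H * Q - K‖ := h.mul_norm_transpose_mul_sub_one_le hK hQ

theorem mul_norm_transpose_mul_right_le (h : IsSpectralSplit H P T σ)
    (h' : IsSpectralSplit K P' T' τ) : τ * ‖P'ᵀ * T‖ ≤ ‖H * Q - K‖ :=
  calc τ * ‖P'ᵀ * T‖ ≤ ‖K * T‖ := h'.mul_norm_transpose_mul_le T
    _ = ‖(Qᵀ * H - K) * T‖ := by
      rw [Matrix.sub_mul, Matrix.mul_assoc, h.mul_right_eq_zero, Matrix.mul_zero, zero_sub,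
        norm_neg]
    _ ≤ ‖Qᵀ * H - K‖ := l2_opNorm_mul_orthonormal_le _ h.transpose_mul_right
    _ = ‖H * Q - K‖ := norm_transpose_mul_sub h.transpose_eq h'.transpose_eq

theorem mul_norm_transpose_mul_right_le_of_orthogonal (h : IsSpectralSplit H P T σ)
    (h' : IsSpectralSplit K P' T' τ) (hQ : Qᵀ * Q = 1) :
    τ * ‖(Q * P')ᵀ * T‖ ≤ ‖H * Q - K‖ :=
  calc τ * ‖(Q * P')ᵀ * T‖ = τ * ‖P'ᵀ * (Qᵀ * T)‖ := by rw [transpose_mul, Matrix.mul_assoc]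
    _ ≤ ‖K * (Qᵀ * T)‖ := h'.mul_norm_transpose_mul_le _
    _ = ‖(K * Qᵀ - H) * T‖ := by
      rw [Matrix.sub_mul, h.mul_right_eq_zero, sub_zero, Matrix.mul_assoc]
    _ ≤ ‖K * Qᵀ - H‖ := l2_opNorm_mul_orthonormal_le _ h.transpose_mul_right
    _ = ‖H * Q - K‖ := norm_sub_mul_orthogonal_transpose hQ

theorem mul_norm_sub_one_mul_le_right (h : IsSpectralSplit H P T σ)
    (h' : IsSpectralSplit K P' T' τ) (hτ : 0 ≤ τ) (hQ : Qᵀ * Q = 1) :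
    τ * ‖(Q - 1) * P‖ ≤ 4 * ‖H * Q - K‖ := by
  have hQ' : Qᵀᵀ * Qᵀ = 1 := by rw [transpose_transpose, mul_eq_one_comm.mp hQ]
  have hP' : τ * ‖(Q - 1) * P'‖ ≤ 2 * ‖H * Q - K‖ := by
    have hle := h'.mul_norm_transpose_mul_sub_one_le h.posSemidef hQ'
    rwa [norm_sub_mul_orthogonal_transpose hQ, ← l2_opNorm_transpose, transpose_mul,
      transpose_sub, transpose_transpose, transpose_transpose, transpose_one] at hle
  have hT' : τ * ‖T'ᵀ * P‖ ≤ ‖H * Q - K‖ := by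
    rw [h'.norm_transpose_mul_comm h.toIsOrthogonalSplit, ← l2_opNorm_transpose, transpose_mul,
      transpose_transpose]
    exact h.mul_norm_transpose_mul_right_le h'
  have hPP : ‖P'ᵀ * P‖ ≤ 1 := l2_opNorm_orthonormal_transpose_mul_orthonormal_le
    h'.transpose_mul_left h.transpose_mul_left
  have hQT : ‖(Q - 1) * T'‖ ≤ 2 := (l2_opNorm_mul_orthonormal_le _ h'.transpose_mul_right).trans
    (norm_orthogonal_sub_one_le hQ)
  calc τ * ‖(Q - 1) * P‖
      ≤ τ * (‖(Q - 1) * P'‖ * ‖P'ᵀ * P‖ + ‖(Q - 1) * T'‖ * ‖T'ᵀ * P‖) := by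
        gcongr
        exact h'.norm_mul_le_add (Q - 1) P
    _ ≤ τ * (‖(Q - 1) * P'‖ * 1 + 2 * ‖T'ᵀ * P‖) := by gcongr
    _ ≤ 4 * ‖H * Q - K‖ := by linarith

theorem mul_norm_transpose_mul_mul_le_right (h : IsSpectralSplit H P T σ)
    (h' : IsSpectralSplit K P' T' τ) (hτ : 0 ≤ τ) (hQ : Qᵀ * Q = 1) :
    τ * ‖Pᵀ * Q * T‖ ≤ 2 * ‖H * Q - K‖ := by
  have hswap : ‖Pᵀ * Q * T'‖ = ‖(Q * P')ᵀ * T‖ := by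
    rw [Matrix.mul_assoc, ← l2_opNorm_transpose, transpose_mul, transpose_transpose,
      (h'.orthogonal_mul hQ).norm_transpose_mul_comm h.toIsOrthogonalSplit,
      ← l2_opNorm_transpose, transpose_mul, transpose_transpose]
  have hQP : ‖Pᵀ * Q * P'‖ ≤ 1 := by
    rw [Matrix.mul_assoc]
    exact l2_opNorm_orthonormal_transpose_mul_orthonormal_le h.transpose_mul_left
      (h'.orthogonal_mul hQ).transpose_mul_left
  have hTT : ‖T'ᵀ * T‖ ≤ 1 := l2_opNorm_orthonormal_transpose_mul_orthonormal_le
    h'.transpose_mul_right h.transpose_mul_right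
  calc τ * ‖Pᵀ * Q * T‖
      ≤ τ * (‖Pᵀ * Q * P'‖ * ‖P'ᵀ * T‖ + ‖Pᵀ * Q * T'‖ * ‖T'ᵀ * T‖) := by
        gcongr
        exact h'.norm_mul_le_add (Pᵀ * Q) T
    _ ≤ τ * (1 * ‖P'ᵀ * T‖ + ‖(Q * P')ᵀ * T‖ * 1) := by
        rw [← hswap]
        gcongr
    _ ≤ 2 * ‖H * Q - K‖ := by
        linarith [h.mul_norm_transpose_mul_right_le h' (Q := Q),
          h.mul_norm_transpose_mul_right_le_of_orthogonal h' hQ]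

theorem max_mul_norm_sub_one_mul_le (h : IsSpectralSplit H P T σ)
    (h' : IsSpectralSplit K P' T' τ) (hmax : 0 ≤ max σ τ) (hQ : Qᵀ * Q = 1) :
    max σ τ * ‖(Q - 1) * P‖ ≤ 4 * ‖H * Q - K‖ := by
  rcases max_choice σ τ with hm | hm <;> rw [hm] at hmax ⊢
  · linarith [h.mul_norm_sub_one_mul_le_left h'.posSemidef hQ, norm_nonneg (H * Q - K)]
  · exact h.mul_norm_sub_one_mul_le_right h' hmax hQ

theorem max_mul_norm_transpose_mul_mul_le (h : IsSpectralSplit H P T σ)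
    (h' : IsSpectralSplit K P' T' τ) (hmax : 0 ≤ max σ τ) (hQ : Qᵀ * Q = 1) :
    max σ τ * ‖Pᵀ * Q * T‖ ≤ 2 * ‖H * Q - K‖ := by
  rcases max_choice σ τ with hm | hm <;> rw [hm] at hmax ⊢
  · exact h.mul_norm_transpose_mul_mul_le_left hmax h'.posSemidef hQ
  · exact h.mul_norm_transpose_mul_mul_le_right h' hmax hQ

theorem exists_orthogonal_max_mul_norm_sub_sq_le (h : IsSpectralSplit H P T σ)
    (h' : IsSpectralSplit K P' T' τ) (hmax : 0 ≤ max σ τ) (hQ : Qᵀ * Q = 1) :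
    ∃ W : Matrix θ θ ℝ, Wᵀ * W = 1 ∧
      (max σ τ * ‖Q - (P * Pᵀ + T * W * Tᵀ)‖) ^ 2 ≤ 24 * ‖H * Q - K‖ ^ 2 := by
  obtain ⟨W, hW, hle⟩ := h.exists_orthogonal_norm_sub_block_sq_le hQ
  refine ⟨W, hW, ?_⟩
  calc (max σ τ * ‖Q - (P * Pᵀ + T * W * Tᵀ)‖) ^ 2
      ≤ max σ τ ^ 2 * (‖(Q - 1) * P‖ ^ 2 + 2 * ‖Pᵀ * Q * T‖ ^ 2) := by
        rw [mul_pow]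
        gcongr
    _ = (max σ τ * ‖(Q - 1) * P‖) ^ 2 + 2 * (max σ τ * ‖Pᵀ * Q * T‖) ^ 2 := by ring
    _ ≤ (4 * ‖H * Q - K‖) ^ 2 + 2 * (2 * ‖H * Q - K‖) ^ 2 := by
        gcongr ?_ ^ 2 + 2 * ?_ ^ 2
        · exact h.max_mul_norm_sub_one_mul_le h' hmax hQ
        · exact h.max_mul_norm_transpose_mul_mul_le h' hmax hQ
    _ = 24 * ‖H * Q - K‖ ^ 2 := by ring

end IsSpectralSplit

section Perturbation

variable {ν κ ρ θ θ' ξ : Type*} [Fintype ν] [Fintype κ] [Fintype ρ] [Fintype θ] [Fintype θ']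
  [Fintype ξ] [DecidableEq κ] [DecidableEq ρ] [DecidableEq θ] [DecidableEq θ'] [DecidableEq ξ]
  {D X X' : Matrix ν κ ℝ} {Xp : Matrix ν ξ ℝ} {P P' : Matrix κ ρ ℝ}
  {T : Matrix κ θ ℝ} {T' : Matrix κ θ' ℝ} {σ τ : ℝ}

theorem norm_transpose_mul_mul_sub_le (hH : (Xᵀ * D)ᵀ = Xᵀ * D) (hK : (X'ᵀ * D)ᵀ = X'ᵀ * D)
    (Q : Matrix κ κ ℝ) : ‖Xᵀ * D * Q - X'ᵀ * D‖ ≤ ‖X' - X * Q‖ * ‖D‖ := by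
  classical
  calc ‖Xᵀ * D * Q - X'ᵀ * D‖ = ‖Qᵀ * (Xᵀ * D) - X'ᵀ * D‖ :=
        (norm_transpose_mul_sub hH hK).symm
    _ = ‖(X' - X * Q)ᵀ * D‖ := by
        rw [norm_sub_rev, transpose_sub, transpose_mul, Matrix.sub_mul, Matrix.mul_assoc]
    _ ≤ ‖X' - X * Q‖ * ‖D‖ := (l2_opNorm_mul _ _).trans_eq (by rw [l2_opNorm_transpose])

theorem norm_sub_le_of_half_le [Nonempty ρ] (hX : Xᵀ * X = 1) (hX' : X'ᵀ * X' = 1)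
    (h : IsSpectralSplit (Xᵀ * D) P T σ) (h' : IsSpectralSplit (X'ᵀ * D) P' T' τ)
    (hmax : 0 < max σ τ) {e : ℝ} (he : 1 / 2 ≤ e) :
    ‖X' - X‖ ≤ (√2 + 6 * ‖D‖ / max σ τ) * e := by
  have hmaxD : max σ τ ≤ ‖D‖ := max_le
    (h.le_norm.trans (l2_opNorm_orthonormal_transpose_mul_le hX D))
    (h'.le_norm.trans (l2_opNorm_orthonormal_transpose_mul_le hX' D))
  have hratio : 6 ≤ 6 * ‖D‖ / max σ τ := by
    rw [le_div_iff₀ hmax]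
    linarith
  calc ‖X' - X‖ ≤ ‖X'‖ + ‖X‖ := norm_sub_le _ _
    _ ≤ 1 + 1 := add_le_add (l2_opNorm_le_one_of_transpose_mul_self hX')
        (l2_opNorm_le_one_of_transpose_mul_self hX)
    _ ≤ (0 + 6) * (1 / 2) := by norm_num
    _ ≤ (√2 + 6 * ‖D‖ / max σ τ) * e := by gcongr; positivity

variable [DecidableEq ν]

theorem exists_orthogonal_norm_sub_le_of_lt_half (hX : IsOrthogonalSplit X Xp)
    (hX' : X'ᵀ * X' = 1) (h : IsSpectralSplit (Xᵀ * D) P T σ)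
    (h' : IsSpectralSplit (X'ᵀ * D) P' T' τ) (hmax : 0 < max σ τ) (he : ‖Xpᵀ * X'‖ < 1 / 2) :
    ∃ W : Matrix θ θ ℝ, Wᵀ * W = 1 ∧
      ‖X' - X * (P * Pᵀ + T * W * Tᵀ)‖ ≤ (√2 + 6 * ‖D‖ / max σ τ) * ‖Xpᵀ * X'‖ := by
  obtain ⟨Q, hQ, hε⟩ := hX.exists_orthogonal_norm_sub_mul_sq_le hX'
  obtain ⟨W, hW, hblock⟩ := h.exists_orthogonal_max_mul_norm_sub_sq_le h' hmax.le hQ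
  have hη := norm_transpose_mul_mul_sub_le h.transpose_eq h'.transpose_eq Q
  set e := ‖Xpᵀ * X'‖
  set U := P * Pᵀ + T * W * Tᵀ
  have hε' : ‖X' - X * Q‖ ^ 2 ≤ 5 / 4 * e ^ 2 := by
    have hsq : e ^ 2 ≤ (1 / 2) ^ 2 := by gcongr
    linarith [mul_le_mul_of_nonneg_left hsq (sq_nonneg e)]
  have hXQ : ‖X' - X * Q‖ ≤ √2 * e := by
    refine le_of_sq_le_sq ?_ (by positivity)
    rw [mul_pow, Real.sq_sqrt zero_le_two]
    nlinarith
  have hQU : ‖Q - U‖ ≤ 6 * ‖D‖ / max σ τ * e := by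
    rw [div_mul_eq_mul_div, le_div_iff₀' hmax]
    refine le_of_sq_le_sq ?_ (by positivity)
    calc (max σ τ * ‖Q - U‖) ^ 2 ≤ 24 * (‖X' - X * Q‖ * ‖D‖) ^ 2 := hblock.trans (by gcongr)
      _ ≤ 24 * (5 / 4 * e ^ 2 * ‖D‖ ^ 2) := by rw [mul_pow]; gcongr
      _ ≤ (6 * ‖D‖ * e) ^ 2 := by nlinarith [sq_nonneg (‖D‖ * e)]
  refine ⟨W, hW, ?_⟩
  calc ‖X' - X * U‖ = ‖(X' - X * Q) + X * (Q - U)‖ := by rw [Matrix.mul_sub, sub_add_sub_cancel]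
    _ ≤ ‖X' - X * Q‖ + ‖Q - U‖ := by
        rw [← l2_opNorm_orthonormal_mul hX.transpose_mul_left (Q - U)]
        exact norm_add_le _ _
    _ ≤ (√2 + 6 * ‖D‖ / max σ τ) * e := by linarith

theorem rank_deficient_spec_bound_general [Nonempty ρ] (hX : IsOrthogonalSplit X Xp)
    (hX' : X'ᵀ * X' = 1) (h : IsSpectralSplit (Xᵀ * D) P T σ)
    (h' : IsSpectralSplit (X'ᵀ * D) P' T' τ) (hmax : 0 < max σ τ) :
    ∃ W : Matrix θ θ ℝ, Wᵀ * W = 1 ∧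
      ‖X' - (X * P * Pᵀ + X * T * W * Tᵀ)‖ ≤ (√2 + 6 * ‖D‖ / max σ τ) * ‖Xpᵀ * X'‖ := by
  have hdist (W : Matrix θ θ ℝ) :
      X * P * Pᵀ + X * T * W * Tᵀ = X * (P * Pᵀ + T * W * Tᵀ) := by
    simp only [Matrix.mul_add, Matrix.mul_assoc]
  simp only [hdist]
  rcases lt_or_ge ‖Xpᵀ * X'‖ (1 / 2) with he | he
  · exact exists_orthogonal_norm_sub_le_of_lt_half hX hX' h h' hmax he
  · refine ⟨1, by simp, ?_⟩
    rw [Matrix.mul_one, h.mul_transpose_add_mul_transpose, Matrix.mul_one]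
    exact norm_sub_le_of_half_le hX.transpose_mul_left hX' h h' hmax he

end Perturbation

section Columns

variable {r m : ℕ}

theorem isOrthogonalSplit_headCols_tailCols (h : r ≤ m) {V : Matrix (Fin m) (Fin m) ℝ}
    (hV : Vᵀ * V = 1) : IsOrthogonalSplit (headCols r h V) (tailCols r h V) :=
  IsOrthogonalSplit.submatrix (finSumFinEquiv.trans (finCongr (Nat.add_sub_cancel' h))) hV

theorem isSpectralSplit_headCols_tailCols (h : r ≤ m) {V H : Matrix (Fin m) (Fin m) ℝ}
    (hV : Vᵀ * V = 1) {s : Fin m → ℝ} {σ : ℝ} (hdec : H = V * diagonal s * Vᵀ)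
    (hH : H.PosSemidef) (hσ : ∀ i : Fin m, (i : ℕ) < r → σ ≤ s i)
    (hzero : ∀ i : Fin m, r ≤ (i : ℕ) → s i = 0) :
    IsSpectralSplit H (headCols r h V) (tailCols r h V) σ where
  toIsOrthogonalSplit := isOrthogonalSplit_headCols_tailCols h hV
  posSemidef := hH
  mul_right_eq_zero := by
    have hHV : H * V = V * diagonal s := by rw [hdec, Matrix.mul_assoc, hV, Matrix.mul_one]
    have hHT : H * tailCols r h V = (H * V).submatrix id _ := rfl
    rw [hHT, hHV]
    ext i j
    simp [hzero]
  posSemidef_compression_sub := by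
    have hVHV : Vᵀ * H * V = diagonal s := by
      rw [hdec, Matrix.mul_assoc, Matrix.mul_assoc, hV, Matrix.mul_one, ← Matrix.mul_assoc, hV,
        Matrix.one_mul]
    have hcomp : (headCols r h V)ᵀ * H * headCols r h V =
        (Vᵀ * H * V).submatrix (Fin.castLE h) (Fin.castLE h) := rfl
    rw [hcomp, hVHV, submatrix_diagonal _ _ (Fin.castLE_injective h),
      smul_one_eq_diagonal, diagonal_sub]
    exact PosSemidef.diagonal fun i => sub_nonneg.mpr (hσ _ i.2)

end Columns

theorem six_mul_div_max_le {σ τ : ℝ} (hσ : 0 < σ) (hτ : 0 < τ) (d : ℝ) :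
    6 * d / max σ τ ≤
      √(8 * d ^ 2 / (σ + τ) ^ 2 + 4 * d ^ 2 / max σ τ ^ 2) + 4 * d / max σ τ := by
  have hsqrt : 2 * d / max σ τ ≤ √(8 * d ^ 2 / (σ + τ) ^ 2 + 4 * d ^ 2 / max σ τ ^ 2) := by
    apply Real.le_sqrt_of_sq_le
    rw [div_pow, mul_pow, show (2 : ℝ) ^ 2 = 4 by norm_num]
    exact le_add_of_nonneg_left (by positivity)
  calc 6 * d / max σ τ = 2 * d / max σ τ + 4 * d / max σ τ := by ring
    _ ≤ _ := by gcongr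

/-- rank-deficient case, spectral norm. With XᵀD = VΣVᵀ, X̃ᵀD = ṼΣ̃Ṽᵀ
spectral decompositions of rank r < k, and X⊥ an orthogonal completion of X, there
exists an orthogonal W ∈ 𝕆^{(k−r)×(k−r)} such that ‖X̃ − (XV₁V₁ᵀ + XV₂WV₂ᵀ)‖₂ ≤
(√2 + √(8‖D‖₂²/(σ_r + σ̃_r)² + 4‖D‖₂²/(max{σ_r, σ̃_r})²) + 4‖D‖₂/max{σ_r, σ̃_r})·‖X⊥ᵀX̃‖₂. -/
theorem rank_deficient_spec_bound {n k r : ℕ} (hr : 1 ≤ r) (hrk : r < k) (hkn : k ≤ n)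
    (D X Xt : Matrix (Fin n) (Fin k) ℝ)
    (Xp : Matrix (Fin n) (Fin (n - k)) ℝ)
    (hX : Xᵀ * X = 1) (hXt : Xtᵀ * Xt = 1)
    (hXp : Xpᵀ * Xp = 1) (hXXp : Xᵀ * Xp = 0)
    (hpsd : (Xᵀ * D).PosSemidef) (hpsdt : (Xtᵀ * D).PosSemidef)
    (hrank : (Xᵀ * D).rank = r) (hrankt : (Xtᵀ * D).rank = r)
    (V Vt : Matrix (Fin k) (Fin k) ℝ) (hV : Vᵀ * V = 1) (hVt : Vtᵀ * Vt = 1)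
    (s st : Fin k → ℝ)
    (hord : ∀ i j : Fin k, i ≤ j → s j ≤ s i)
    (hordt : ∀ i j : Fin k, i ≤ j → st j ≤ st i)
    (hpos : ∀ i : Fin k, (i : ℕ) < r → 0 < s i)
    (hpost : ∀ i : Fin k, (i : ℕ) < r → 0 < st i)
    (hzero : ∀ i : Fin k, r ≤ (i : ℕ) → s i = 0)
    (hzerot : ∀ i : Fin k, r ≤ (i : ℕ) → st i = 0)
    (hdec : Xᵀ * D = V * Matrix.diagonal s * Vᵀ)
    (hdect : Xtᵀ * D = Vt * Matrix.diagonal st * Vtᵀ) :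
    ∃ W : Matrix (Fin (k - r)) (Fin (k - r)) ℝ, Wᵀ * W = 1 ∧
      specNorm (Xt - (X * headCols r hrk.le V * (headCols r hrk.le V)ᵀ +
            X * tailCols r hrk.le V * W * (tailCols r hrk.le V)ᵀ))
        ≤ (Real.sqrt 2 +
            Real.sqrt (8 * specNorm D ^ 2 /
                (s ⟨r - 1, by omega⟩ + st ⟨r - 1, by omega⟩) ^ 2 +
              4 * specNorm D ^ 2 /
                max (s ⟨r - 1, by omega⟩) (st ⟨r - 1, by omega⟩) ^ 2) +
            4 * specNorm D / max (s ⟨r - 1, by omega⟩) (st ⟨r - 1, by omega⟩)) *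
          specNorm (Xpᵀ * Xt) := by
  have hcompl : IsOrthogonalSplit X Xp := .of_equiv
    (finSumFinEquiv.trans (finCongr (Nat.add_sub_cancel' hkn))) hX hXp hXXp
  have hsplit := isSpectralSplit_headCols_tailCols hrk.le hV hdec hpsd
    (σ := s ⟨r - 1, by omega⟩) (fun i hi => hord _ _ (Nat.le_sub_one_of_lt hi)) hzero
  have hsplitt := isSpectralSplit_headCols_tailCols hrk.le hVt hdect hpsdt
    (σ := st ⟨r - 1, by omega⟩) (fun i hi => hordt _ _ (Nat.le_sub_one_of_lt hi)) hzerot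
  have hσ : 0 < s ⟨r - 1, by omega⟩ := hpos _ (Nat.sub_one_lt_of_lt hr)
  have hτ : 0 < st ⟨r - 1, by omega⟩ := hpost _ (Nat.sub_one_lt_of_lt hr)
  have : Nonempty (Fin r) := ⟨⟨0, hr⟩⟩
  obtain ⟨W, hW, hle⟩ := rank_deficient_spec_bound_general hcompl hXt hsplit hsplitt
    (lt_max_of_lt_left hσ)
  refine ⟨W, hW, hle.trans (mul_le_mul_of_nonneg_right ?_ (norm_nonneg _))⟩
  rw [add_assoc]
  exact add_le_add_right (six_mul_div_max_le hσ hτ (specNorm D)) _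
end
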